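/- arXiv:math/9912126 — 6 statements merged into one kernel-verified Lean document; each statement's English description precedes it below -/
import Mathlib

section
/- For a finite poset P of cardinality n, define c_k as the maximal cardinality of a union of k chains, and λ_k = c_k - c_{k-1}. Then the sequence (λ_1, λ_2, ...) is weakly decreasing. -/
open Finset

/-- `cMax α k` is the maximal cardinality of a union of `k` pairwise disjoint chains
in the finite poset `α`. -/
noncomputable def cMax (α : Type*) [PartialOrder α] [Fintype α] [DecidableEq α] (k : ℕ) : ℕ :=
  sSup {n : ℕ | ∃ f : Fin k → Finset α,
    (∀ i, IsChain (· ≤ ·) (↑(f i) : Set α)) ∧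
    Pairwise (Function.onFun Disjoint f) ∧
    n = (Finset.univ.biUnion f).card}

/-- `aMax α k` is the maximal cardinality of a union of `k` pairwise disjoint antichains
in the finite poset `α`. -/
noncomputable def aMax (α : Type*) [PartialOrder α] [Fintype α] [DecidableEq α] (k : ℕ) : ℕ :=
  sSup {n : ℕ | ∃ f : Fin k → Finset α,
    (∀ i, IsAntichain (· ≤ ·) (↑(f i) : Set α)) ∧
    Pairwise (Function.onFun Disjoint f) ∧
    n = (Finset.univ.biUnion f).card}

/-- The `k`-th row length of the Greene shape `λ(α)`. -/
noncomputable def lam (α : Type*) [PartialOrder α] [Fintype α] [DecidableEq α] (k : ℕ) : ℕ :=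
  cMax α k - cMax α (k - 1)

/-- The `k`-th column length of the Greene shape, `μ_k = a_k - a_{k-1}`. -/
noncomputable def mu (α : Type*) [PartialOrder α] [Fintype α] [DecidableEq α] (k : ℕ) : ℕ :=
  aMax α k - aMax α (k - 1)

theorem edge_aux {W : Type*} [Fintype W] [DecidableEq W] (H : SimpleGraph W) [DecidableRel H.Adj]
    (hc : H.Connected) (s : Finset W) (hs : ∀ x y, H.Adj x y → x ∈ s ∨ y ∈ s)
    (hd : ∀ x ∈ s, H.degree x ≤ 2) : Fintype.card W ≤ 2 * s.card + 1 := by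
  have h1 := hc.card_vert_le_card_edgeSet_add_one
  rw [Nat.card_eq_fintype_card, Nat.card_eq_fintype_card, ← SimpleGraph.edgeFinset_card] at h1
  have h2 : H.edgeFinset ⊆ s.biUnion (fun x => H.incidenceFinset x) := by
    intro e
    induction e using Sym2.ind with
    | _ x y =>
      intro he
      rw [SimpleGraph.mem_edgeFinset, SimpleGraph.mem_edgeSet] at he
      rw [mem_biUnion]
      rcases hs x y he with h | h
      · exact ⟨x, h, by simp [SimpleGraph.incidenceSet, he]⟩
      · exact ⟨y, h, by simp [SimpleGraph.incidenceSet, he]⟩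
  have h3 := card_le_card h2
  have h4 : (s.biUnion (fun x => H.incidenceFinset x)).card ≤ s.card * 2 :=
    card_biUnion_le_card_mul _ _ _ (fun x hx => by
      rw [SimpleGraph.card_incidenceFinset_eq_degree]; exact hd x hx)
  omega

theorem comp_aux {A B : Type*} [Fintype A] [Fintype B] [DecidableEq A] [DecidableEq B]
    (r : A → B → Prop) [∀ a b, Decidable (r a b)]
    (hd : ∀ a, (univ.filter (fun b => r a b)).card ≤ 2) (hAB : Fintype.card A < Fintype.card B) :
    ∃ (CA : Finset A) (CB : Finset B), (∀ a b, r a b → (a ∈ CA ↔ b ∈ CB)) ∧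
      CB.card = CA.card + 1 := by
  classical
  let G : SimpleGraph (A ⊕ B) := SimpleGraph.fromRel
    (fun x y => ∃ a b, x = Sum.inl a ∧ y = Sum.inr b ∧ r a b)
  have hG : ∀ a b, G.Adj (Sum.inl a) (Sum.inr b) ↔ r a b := by
    intro a b; simp [G]
  have hGA : ∀ a a', ¬ G.Adj (Sum.inl a) (Sum.inl a') := by
    intro a b; simp [G]
  have hGB : ∀ a a', ¬ G.Adj (Sum.inr a) (Sum.inr a') := by
    intro a b; simp [G]
  let p : A → G.ConnectedComponent := fun a => G.connectedComponentMk (Sum.inl a)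
  let q : B → G.ConnectedComponent := fun b => G.connectedComponentMk (Sum.inr b)
  have hex : ∃ C : G.ConnectedComponent,
      (univ.filter (fun a => p a = C)).card < (univ.filter (fun b => q b = C)).card := by
    by_contra! h
    have e1 := card_eq_sum_card_fiberwise (f := p) (s := univ) (t := univ) (by simp)
    have e2 := card_eq_sum_card_fiberwise (f := q) (s := univ) (t := univ) (by simp)
    have := sum_le_sum (s := univ) (fun C _ => h C)
    rw [← e1, ← e2, card_univ, card_univ] at this
    omega
  obtain ⟨C, hC⟩ := hex
  refine ⟨univ.filter (fun a => p a = C), univ.filter (fun b => q b = C), ?_, ?_⟩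
  · intro a b hab
    have : p a = q b := SimpleGraph.ConnectedComponent.sound (((hG a b).2 hab).reachable)
    simp [this]
  · have hcon : (G.induce C.supp).Connected := C.connected_toSimpleGraph
    let s : Finset C.supp := univ.filter (fun x => x.1.isLeft = true)
    have key := edge_aux (G.induce C.supp) hcon s (by
      rintro ⟨x | x, hx⟩ ⟨y | y, hy⟩ h
      · simp [s]
      · simp [s]
      · simp [s]
      · exact absurd h (hGB _ _)) (by
      rintro ⟨x | x, hx⟩ hxs
      · rw [← SimpleGraph.card_neighborFinset_eq_degree]
        refine le_trans ?_ (hd x)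
        rw [← card_map (Function.Embedding.inr : B ↪ A ⊕ B),
          ← card_map (Function.Embedding.subtype (· ∈ C.supp))]
        apply card_le_card
        intro y hy
        simp only [mem_map, SimpleGraph.mem_neighborFinset] at hy
        obtain ⟨⟨y' | y', hy'⟩, h, rfl⟩ := hy
        · exact absurd h (hGA _ _)
        · simp only [mem_map]
          exact ⟨y', by simpa using (hG _ _).1 h, rfl⟩
      · simp [s] at hxs)
    have hs : s.card = (univ.filter (fun a => p a = C)).card := by
      rw [← card_map (Function.Embedding.inl : A ↪ A ⊕ B),
          ← card_map (Function.Embedding.subtype (· ∈ C.supp))]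
      congr 1
      ext (y | y) <;> simp [s, p, SimpleGraph.ConnectedComponent.mem_supp_iff]
    have ht : sᶜ.card = (univ.filter (fun b => q b = C)).card := by
      rw [← card_map (Function.Embedding.inr : B ↪ A ⊕ B),
          ← card_map (Function.Embedding.subtype (· ∈ C.supp))]
      congr 1
      ext (y | y) <;> simp [s, q, SimpleGraph.ConnectedComponent.mem_supp_iff]
    have := card_add_card_compl s
    omega

/-- partial injections given as sets of pairs -/
def PInj {α : Type*} [PartialOrder α] (M : Finset (α × α)) : Prop :=
  (∀ e ∈ M, e.1 ≤ e.2) ∧ (∀ e ∈ M, ∀ e' ∈ M, e.1 = e'.1 → e = e') ∧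
    (∀ e ∈ M, ∀ e' ∈ M, e.2 = e'.2 → e = e')

theorem exch {α : Type*} [PartialOrder α] [DecidableEq α] (M N : Finset (α × α))
    (hM : PInj M) (hN : PInj N) (h : M.card < N.card) :
    ∃ M' N' : Finset (α × α), PInj M' ∧ PInj N' ∧ M'.card = M.card + 1 ∧ N'.card + 1 = N.card ∧
      (M'.filter (fun e => e.1 = e.2)).card + (N'.filter (fun e => e.1 = e.2)).card =
      (M.filter (fun e => e.1 = e.2)).card + (N.filter (fun e => e.1 = e.2)).card := by
  classical
  obtain ⟨CA, CB, hcl, hcard⟩ := comp_aux (A := M) (B := N)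
    (fun a b => a.1.1 = b.1.1 ∨ a.1.2 = b.1.2) (by
      intro a
      rw [filter_or]
      refine (card_union_le _ _).trans ?_
      have h1 : (univ.filter (fun b : N => a.1.1 = b.1.1)).card ≤ 1 := by
        rw [card_le_one]
        intro b hb b' hb'
        simp only [mem_filter, mem_univ, true_and] at hb hb'
        exact Subtype.ext (hN.2.1 _ b.2 _ b'.2 (hb.symm.trans hb'))
      have h2 : (univ.filter (fun b : N => a.1.2 = b.1.2)).card ≤ 1 := by
        rw [card_le_one]
        intro b hb b' hb'
        simp only [mem_filter, mem_univ, true_and] at hb hb'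
        exact Subtype.ext (hN.2.2 _ b.2 _ b'.2 (hb.symm.trans hb'))
      omega) (by simpa using h)
  let P := CA.map (Function.Embedding.subtype (· ∈ M))
  let Q := CB.map (Function.Embedding.subtype (· ∈ N))
  have hPM : P ⊆ M := by intro x hx; simp [P] at hx; exact hx.1
  have hQN : Q ⊆ N := by intro x hx; simp [Q] at hx; exact hx.1
  have hPQ : Q.card = P.card + 1 := by simp [P, Q, hcard]
  have hcl' : ∀ a ∈ M, ∀ b ∈ N, (a.1 = b.1 ∨ a.2 = b.2) → (a ∈ P ↔ b ∈ Q) := by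
    intro a ha b hb hab
    have := hcl ⟨a, ha⟩ ⟨b, hb⟩ hab
    simpa [P, Q, ha, hb] using this
  clear_value P Q
  have d1 : Disjoint (M \ P) Q := by
    rw [disjoint_left]; intro x hx hx'
    rw [mem_sdiff] at hx
    exact hx.2 ((hcl' x hx.1 x (hQN hx') (Or.inl rfl)).2 hx')
  have d2 : Disjoint (N \ Q) P := by
    rw [disjoint_left]; intro x hx hx'
    rw [mem_sdiff] at hx
    exact hx.2 ((hcl' x (hPM hx') x hx.1 (Or.inl rfl)).1 hx')
  have cM := card_sdiff_add_card_eq_card hPM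
  have cN := card_sdiff_add_card_eq_card hQN
  refine ⟨(M \ P) ∪ Q, (N \ Q) ∪ P, ⟨?_, ?_, ?_⟩, ⟨?_, ?_, ?_⟩, ?_, ?_, ?_⟩
  · intro e he
    rw [mem_union, mem_sdiff] at he
    rcases he with he | he
    · exact hM.1 e he.1
    · exact hN.1 e (hQN he)
  · intro e he e' he' hee
    rw [mem_union, mem_sdiff] at he he'
    rcases he with he | he <;> rcases he' with he' | he'
    · exact hM.2.1 e he.1 e' he'.1 hee
    · exact absurd ((hcl' e he.1 e' (hQN he') (Or.inl hee)).2 he') he.2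
    · exact absurd ((hcl' e' he'.1 e (hQN he) (Or.inl hee.symm)).2 he) he'.2
    · exact hN.2.1 e (hQN he) e' (hQN he') hee
  · intro e he e' he' hee
    rw [mem_union, mem_sdiff] at he he'
    rcases he with he | he <;> rcases he' with he' | he'
    · exact hM.2.2 e he.1 e' he'.1 hee
    · exact absurd ((hcl' e he.1 e' (hQN he') (Or.inr hee)).2 he') he.2
    · exact absurd ((hcl' e' he'.1 e (hQN he) (Or.inr hee.symm)).2 he) he'.2
    · exact hN.2.2 e (hQN he) e' (hQN he') hee
  · intro e he
    rw [mem_union, mem_sdiff] at he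
    rcases he with he | he
    · exact hN.1 e he.1
    · exact hM.1 e (hPM he)
  · intro e he e' he' hee
    rw [mem_union, mem_sdiff] at he he'
    rcases he with he | he <;> rcases he' with he' | he'
    · exact hN.2.1 e he.1 e' he'.1 hee
    · exact absurd ((hcl' e' (hPM he') e he.1 (Or.inl hee.symm)).1 he') he.2
    · exact absurd ((hcl' e (hPM he) e' he'.1 (Or.inl hee)).1 he) he'.2
    · exact hM.2.1 e (hPM he) e' (hPM he') hee
  · intro e he e' he' hee
    rw [mem_union, mem_sdiff] at he he'
    rcases he with he | he <;> rcases he' with he' | he'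
    · exact hN.2.2 e he.1 e' he'.1 hee
    · exact absurd ((hcl' e' (hPM he') e he.1 (Or.inr hee.symm)).1 he') he.2
    · exact absurd ((hcl' e (hPM he) e' he'.1 (Or.inr hee)).1 he) he'.2
    · exact hM.2.2 e (hPM he) e' (hPM he') hee
  · rw [card_union_of_disjoint d1]; omega
  · rw [card_union_of_disjoint d2]; omega
  · simp only [card_filter]
    rw [sum_union d1, sum_union d2, ← sum_sdiff hPM, ← sum_sdiff hQN]
    ring

theorem cMax_bdd (α : Type*) [PartialOrder α] [Fintype α] [DecidableEq α] (k : ℕ) :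
    BddAbove {n : ℕ | ∃ f : Fin k → Finset α,
    (∀ i, IsChain (· ≤ ·) (↑(f i) : Set α)) ∧
    Pairwise (Function.onFun Disjoint f) ∧
    n = (Finset.univ.biUnion f).card} := by
  refine ⟨Fintype.card α, ?_⟩
  rintro n ⟨f, -, -, rfl⟩
  exact card_le_univ _

theorem chains_to_pinj (α : Type*) [PartialOrder α] [Fintype α] [DecidableEq α] (k : ℕ) :
    ∃ M : Finset (α × α), PInj M ∧ Fintype.card α ≤ M.card + k ∧
      (M.filter (fun e => e.1 = e.2)).card + cMax α k ≤ Fintype.card α := by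
  classical
  have hmem := Nat.sSup_mem (s := {n : ℕ | ∃ f : Fin k → Finset α,
    (∀ i, IsChain (· ≤ ·) (↑(f i) : Set α)) ∧
    Pairwise (Function.onFun Disjoint f) ∧
    n = (Finset.univ.biUnion f).card}) ⟨_, fun _ => ∅, fun i => by simp [IsChain], fun i j _ => disjoint_empty_left _, rfl⟩ (cMax_bdd α k)
  obtain ⟨f, hch, hdis, hcard⟩ := hmem
  change cMax α k = _ at hcard
  rw [hcard]
  have huniq : ∀ i j x, x ∈ f i → x ∈ f j → i = j := by
    intro i j x hi hj
    by_contra hne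
    exact (disjoint_left.1 (hdis hne)) hi hj
  have hcmp : ∀ i x y, x ∈ f i → y ∈ f i → x ≤ y ∨ y ≤ x := by
    intro i x y hx hy
    exact (hch i).total hx hy
  let S : α → α → Prop := fun x y => ∃ i, x ∈ f i ∧ y ∈ f i ∧ x < y ∧ ∀ z ∈ f i, x < z → y ≤ z
  let M : Finset (α × α) := univ.filter
    (fun e => (e.1 = e.2 ∧ ∀ i, e.1 ∉ f i) ∨ S e.1 e.2)
  have hM : PInj M := by
    refine ⟨?_, ?_, ?_⟩
    · rintro ⟨x, y⟩ he
      simp only [M, mem_filter, mem_univ, true_and] at he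
      rcases he with he | ⟨i, _, _, h, _⟩
      · exact he.1.le
      · exact h.le
    · rintro ⟨x, y⟩ he ⟨x', y'⟩ he' hee
      simp only [M, mem_filter, mem_univ, true_and] at he he' hee
      subst hee
      rcases he with ⟨rfl, he⟩ | ⟨i, hx, hy, h, hmin⟩ <;>
      rcases he' with ⟨rfl, he'⟩ | ⟨j, hx', hy', h', hmin'⟩
      · rfl
      · exact absurd hx' (he j)
      · exact absurd hx (he' i)
      · obtain rfl := huniq _ _ _ hx hx'
        rw [le_antisymm (hmin _ hy' h') (hmin' _ hy h)]
    · rintro ⟨x, y⟩ he ⟨x', y'⟩ he' hee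
      simp only [M, mem_filter, mem_univ, true_and] at he he' hee
      subst hee
      rcases he with ⟨rfl, he⟩ | ⟨i, hx, hy, h, hmin⟩ <;>
      rcases he' with ⟨rfl, he'⟩ | ⟨j, hx', hy', h', hmin'⟩
      · rfl
      · exact absurd hy' (he j)
      · exact absurd hy (he' i)
      · obtain rfl := huniq _ _ _ hy hy'
        have : x = x' := by
          by_contra hne
          rcases hcmp i x x' hx hx' with hl | hl
          · exact absurd (hmin x' hx' (lt_of_le_of_ne hl hne)) (not_le_of_gt h')
          · exact absurd (hmin' x hx (lt_of_le_of_ne hl (Ne.symm hne))) (not_le_of_gt h)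
        rw [this]
  refine ⟨M, hM, ?_, ?_⟩
  · have h1 : (M.image Prod.fst).card = M.card :=
      card_image_of_injOn (fun e he e' he' h => hM.2.1 e he e' he' h)
    have hmax : ∀ x ∈ (M.image Prod.fst)ᶜ, ∃ i, x ∈ f i ∧ ∀ z ∈ f i, ¬ x < z := by
      intro x hx
      simp only [mem_compl, mem_image, not_exists, not_and] at hx
      have hxi : ∃ i, x ∈ f i := by
        by_contra! hno
        exact hx (x, x) (by simp [M, hno]) rfl
      obtain ⟨i, hi⟩ := hxi
      refine ⟨i, hi, ?_⟩
      by_contra! hz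
      obtain ⟨z, hz, hxz⟩ := hz
      obtain ⟨y, hy⟩ := ((f i).filter (fun z => x < z)).exists_minimal
        ⟨z, by simp [hz, hxz]⟩
      have hyy : y ∈ (f i).filter (fun z => x < z) := hy.1
      rw [mem_filter] at hyy
      refine hx (x, y) ?_ rfl
      simp only [M, mem_filter, mem_univ, true_and]
      refine Or.inr ⟨i, hi, hyy.1, hyy.2, ?_⟩
      intro w hw hxw
      rcases hcmp i y w hyy.1 hw with h | h
      · exact h
      · exact hy.2 (mem_filter.2 ⟨hw, hxw⟩) h
    choose g hg using hmax
    have h2 : (M.image Prod.fst)ᶜ.card ≤ (univ : Finset (Fin k)).card := by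
      rw [← card_attach]
      refine card_le_card_of_injOn (fun x => g x.1 x.2) (by simp) ?_
      rintro ⟨x, hx⟩ _ ⟨y, hy⟩ _ hxy
      apply Subtype.ext
      change x = y
      change g x hx = g y hy at hxy
      have a := hg x hx
      have b := hg y hy
      rw [← hxy] at b
      by_contra hne
      rcases hcmp _ x y a.1 b.1 with h | h
      · exact a.2 y b.1 (lt_of_le_of_ne h hne)
      · exact b.2 x a.1 (lt_of_le_of_ne h (Ne.symm hne))
    rw [card_univ, Fintype.card_fin] at h2
    have := card_add_card_compl (M.image Prod.fst)
    omega
  · rw [← card_add_card_compl (univ.biUnion f), add_comm]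
    refine Nat.add_le_add_left ?_ _
    refine card_le_card_of_injOn Prod.fst ?_ ?_
    · rintro ⟨x, y⟩ he
      simp only [M, coe_filter, mem_filter, mem_univ, true_and, Set.mem_ofPred_eq] at he
      obtain ⟨he, rfl⟩ := he
      rcases he with he | ⟨i, _, _, h, _⟩
      · simpa using he.2
      · exact absurd h (lt_irrefl _)
    · intro e he e' he' h
      exact hM.2.1 e (mem_filter.1 he).1 e' (mem_filter.1 he').1 h

theorem pinj_to_chains (α : Type*) [PartialOrder α] [Fintype α] [DecidableEq α] (k : ℕ)
    (M : Finset (α × α)) (hM : PInj M) (hk : Fintype.card α ≤ M.card + k) :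
    Fintype.card α ≤ (M.filter (fun e => e.1 = e.2)).card + cMax α k := by
  classical
  let r : α → α → Prop := fun x y => (x, y) ∈ M
  have hru : Relator.RightUnique r := by
    intro x y z h h'
    exact congrArg Prod.snd (hM.2.1 _ h _ h' rfl)
  have hlu : Relator.RightUnique (Function.swap r) := by
    intro x y z h h'
    exact congrArg Prod.fst (hM.2.2 _ h _ h' rfl)
  have hle : ∀ x y, Relation.ReflTransGen r x y → x ≤ y := by
    intro x y h
    induction h with
    | refl => exact le_rfl
    | tail _ h ih => exact ih.trans (hM.1 _ h)
  let R : Finset α := (M.image Prod.snd)ᶜ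
  have hroot : ∀ x y, y ∈ R → Relation.ReflTransGen r x y → x = y := by
    intro x y hy h
    rcases Relation.ReflTransGen.cases_tail h with h | ⟨c, _, h⟩
    · exact h.symm
    · simp only [R, mem_compl, mem_image, not_exists, not_and] at hy
      exact absurd rfl (hy (c, y) h)
  have hRk : R.card ≤ k := by
    have h1 : (M.image Prod.snd).card = M.card :=
      card_image_of_injOn (fun e he e' he' h => hM.2.2 e he e' he' h)
    have := card_add_card_compl (M.image Prod.snd)
    simp only [R]
    omega
  obtain ⟨φ⟩ : Nonempty (R ↪ Fin k) :=
    Function.Embedding.nonempty_of_card_le (by simpa using hRk)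
  let f : Fin k → Finset α := fun i =>
    univ.filter (fun x => ∃ ρ : R, φ ρ = i ∧ Relation.ReflTransGen r ρ.1 x)
  have hle2 : (univ.biUnion f).card ≤ cMax α k := by
    refine le_csSup (cMax_bdd α k) ⟨f, ?_, ?_, rfl⟩
    · intro i x hx y hy _
      simp only [f, coe_filter, mem_univ, true_and, Set.mem_ofPred_eq] at hx hy
      obtain ⟨ρ, hρ, h⟩ := hx
      obtain ⟨σ, hσ, h'⟩ := hy
      obtain rfl : ρ = σ := φ.injective (hρ.trans hσ.symm)
      rcases Relation.ReflTransGen.total_of_right_unique hru h h' with h | h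
      · exact Or.inl (hle _ _ h)
      · exact Or.inr (hle _ _ h)
    · intro i j hij
      rw [Function.onFun, disjoint_left]
      intro x hx hy
      simp only [f, mem_filter, mem_univ, true_and] at hx hy
      obtain ⟨ρ, hρ, h⟩ := hx
      obtain ⟨σ, hσ, h'⟩ := hy
      apply hij
      rw [← hρ, ← hσ]
      congr 1
      apply Subtype.ext
      rcases Relation.ReflTransGen.total_of_right_unique hlu
        (Relation.reflTransGen_swap.2 h) (Relation.reflTransGen_swap.2 h') with h | h
      · exact (hroot _ _ ρ.2 (Relation.reflTransGen_swap.1 h)).symm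
      · exact hroot _ _ σ.2 (Relation.reflTransGen_swap.1 h)
  have hcov : ∀ x, (x, x) ∉ M → ∃ ρ ∈ R, Relation.ReflTransGen r ρ x := by
    intro x
    induction x using WellFoundedLT.induction with
    | ind x ih =>
      intro hx
      by_cases hxR : x ∈ R
      · exact ⟨x, hxR, .refl⟩
      · simp only [R, mem_compl, mem_image, not_not] at hxR
        obtain ⟨⟨y, x'⟩, he, rfl⟩ := hxR
        have hne : y ≠ x' := by rintro rfl; exact hx he
        obtain ⟨ρ, hρ, h⟩ := ih y (lt_of_le_of_ne (hM.1 _ he) hne) (by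
          intro hy
          exact hne (congrArg Prod.snd (hM.2.1 _ hy _ he rfl)))
        exact ⟨ρ, hρ, h.tail he⟩
  have hcompl : (univ.biUnion f)ᶜ.card ≤ (M.filter (fun e => e.1 = e.2)).card := by
    refine card_le_card_of_injOn (fun x => (x, x)) ?_ ?_
    · intro x hx
      simp only [coe_compl, Set.mem_compl_iff, mem_coe, mem_biUnion, mem_univ, true_and,
        not_exists] at hx
      rw [mem_coe, mem_filter]
      refine ⟨?_, rfl⟩
      by_contra hxM
      obtain ⟨ρ, hρ, h⟩ := hcov x hxM
      exact hx (φ ⟨ρ, hρ⟩) (mem_filter.2 ⟨mem_univ _, ⟨ρ, hρ⟩, rfl, h⟩)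
    · intro x _ y _ h
      exact congrArg Prod.fst h
  have := card_add_card_compl (univ.biUnion f)
  omega

theorem cMax_concave (α : Type*) [PartialOrder α] [Fintype α] [DecidableEq α] (k : ℕ) :
    cMax α (k + 2) + cMax α k ≤ 2 * cMax α (k + 1) := by
  obtain ⟨M, hM, hM1, hM2⟩ := chains_to_pinj α (k + 2)
  obtain ⟨N, hN, hN1, hN2⟩ := chains_to_pinj α k
  by_cases h : Fintype.card α ≤ M.card + (k + 1)
  · have := pinj_to_chains α (k + 1) M hM h
    have := pinj_to_chains α (k + 1) N hN (by omega)
    omega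
  · obtain ⟨M', N', hM', hN', h1, h2, h3⟩ := exch M N hM hN (by omega)
    have := pinj_to_chains α (k + 1) M' hM' (by omega)
    have := pinj_to_chains α (k + 1) N' hN' (by omega)
    omega

theorem greene_lambda_weakly_decreasing
    (α : Type*) [PartialOrder α] [Fintype α] [DecidableEq α] :
    ∀ k : ℕ, 1 ≤ k → lam α (k + 1) ≤ lam α k := by
  intro k hk
  obtain ⟨k, rfl⟩ : ∃ j, k = j + 1 := ⟨k - 1, by omega⟩
  have := cMax_concave α k
  simp only [lam, Nat.add_sub_cancel]
  rw [show k + 1 + 1 = k + 2 from rfl]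
  omega
end

section
/- Let p be a maximal element of a finite poset P. Then there exists K ≥ 1 such that c_i(P - {p}) = c_i(P) for i < K and c_i(P - {p}) = c_i(P) - 1 for i ≥ K. -/
open Finset

namespace RemC

variable {α : Type*} [PartialOrder α] [Fintype α] [DecidableEq α]

def Good {k : ℕ} (σ : Equiv.Perm (α ⊕ Fin k)) : Prop :=
  ∀ v w : α, σ (Sum.inl v) = Sum.inl w → v ≤ w

def nfix {k : ℕ} (σ : Equiv.Perm (α ⊕ Fin k)) : Finset α :=
  Finset.univ.filter (fun v => σ (Sum.inl v) ≠ Sum.inl v)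

def Fam {k : ℕ} (f : Fin k → Finset α) : Prop :=
  (∀ i, IsChain (· ≤ ·) (↑(f i) : Set α)) ∧ Pairwise (Function.onFun Disjoint f)

lemma fam_disj {k : ℕ} {f : Fin k → Finset α} (hf : Fam f) {i j : Fin k} {x : α}
    (hi : x ∈ f i) (hj : x ∈ f j) : i = j := by
  by_contra h
  exact Finset.disjoint_left.1 (hf.2 h) hi hj

lemma fam_to_perm {k : ℕ} (n : ℕ) : ∀ (f : Fin k → Finset α), Fam f →
    (Finset.univ.biUnion f).card = n →
    ∃ σ : Equiv.Perm (α ⊕ Fin k), Good σ ∧ (∀ v, σ (Sum.inl v) ≠ Sum.inl v ↔ ∃ i, v ∈ f i) ∧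
      (∀ v i, σ (Sum.inl v) = Sum.inr i → v ∈ f i) ∧
      (∀ i, f i = ∅ → σ (Sum.inr i) = Sum.inr i) := by
  induction n with
  | zero =>
    intro f hf hc
    have he : ∀ i, f i = ∅ := by
      intro i
      rw [Finset.card_eq_zero] at hc
      apply Finset.subset_empty.1
      rw [← hc]
      exact Finset.subset_biUnion_of_mem f (Finset.mem_univ i)
    refine ⟨1, ?_, ?_, ?_, ?_⟩
    · intro v w h
      simp at h
      exact h.le
    · simp [he]
    · simp
    · simp
  | succ n ih =>
    intro f hf hc
    have hne : (Finset.univ.biUnion f).Nonempty := by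
      rw [← Finset.card_pos]; omega
    obtain ⟨x, hx⟩ := Finset.exists_maximal hne
    obtain ⟨i, -, hi⟩ := Finset.mem_biUnion.1 hx.1
    have hmax : ∀ j, ∀ v ∈ f j, x ≤ v → v = x := by
      intro j v hv hxv
      exact le_antisymm (hx.2 (Finset.mem_biUnion.2 ⟨j, Finset.mem_univ _, hv⟩) hxv) hxv
    let f' : Fin k → Finset α := fun j => (f j).erase x
    have hf' : Fam f' := by
      refine ⟨fun j => (hf.1 j).mono ?_, fun a b hab => ?_⟩
      · simp [f']
      · exact Finset.disjoint_of_subset_left (Finset.erase_subset _ _)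
          (Finset.disjoint_of_subset_right (Finset.erase_subset _ _) (hf.2 hab))
    have hc' : (Finset.univ.biUnion f').card = n := by
      have : Finset.univ.biUnion f' = (Finset.univ.biUnion f).erase x := by
        ext v; simp [f']
      rw [this, Finset.card_erase_of_mem hx.1, hc]; rfl
    obtain ⟨σ, hg, hnf, htop, hemp⟩ := ih f' hf' hc'
    have hsx : σ (Sum.inl x) = Sum.inl x := by
      by_contra h
      obtain ⟨j, hj⟩ := (hnf x).1 h
      simp [f'] at hj
    have hsv : ∀ v, v ≠ x → σ (Sum.inl v) ≠ Sum.inl x := by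
      intro v hv h
      rw [← hsx] at h
      exact hv (Sum.inl.inj (σ.injective h))
    have hsr : ∀ j, σ (Sum.inr j) ≠ Sum.inl x := by
      intro v h
      rw [← hsx] at h
      simpa using (σ.injective h)
    refine ⟨Equiv.swap (Sum.inl x) (Sum.inr i) * σ, ?_, ?_, ?_, ?_⟩
    · intro v w h
      rw [Equiv.Perm.mul_apply] at h
      by_cases hvx : v = x
      · subst hvx
        rw [hsx, Equiv.swap_apply_left] at h
        cases h
      · by_cases h2 : σ (Sum.inl v) = Sum.inr i
        · rw [h2, Equiv.swap_apply_right] at h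
          cases h
          have hv : v ∈ f i := Finset.mem_of_mem_erase (htop v i h2)
          rcases (hf.1 i).total hv hi with h3 | h3
          · exact h3
          · exact (hmax i v hv h3).le
        · rw [Equiv.swap_apply_of_ne_of_ne (hsv v hvx) h2] at h
          exact hg v w h
    · intro v
      rw [Equiv.Perm.mul_apply]
      by_cases hvx : v = x
      · subst hvx
        rw [hsx, Equiv.swap_apply_left]
        simp only [ne_eq, reduceCtorEq, not_false_eq_true, true_iff]
        exact ⟨i, hi⟩
      · have h3 : (∃ j, v ∈ f j) ↔ ∃ j, v ∈ f' j := by simp [f', hvx]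
        rw [h3, ← hnf]
        by_cases h2 : σ (Sum.inl v) = Sum.inr i
        · rw [h2, Equiv.swap_apply_right]
          simp [Ne.symm hvx]
        · rw [Equiv.swap_apply_of_ne_of_ne (hsv v hvx) h2]
    · intro v j h
      rw [Equiv.Perm.mul_apply] at h
      by_cases hvx : v = x
      · subst hvx
        rw [hsx, Equiv.swap_apply_left] at h
        cases h
        exact hi
      · by_cases h2 : σ (Sum.inl v) = Sum.inr i
        · rw [h2, Equiv.swap_apply_right] at h
          cases h
        · rw [Equiv.swap_apply_of_ne_of_ne (hsv v hvx) h2] at h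
          exact Finset.mem_of_mem_erase (htop v j h)
    · intro j hj
      have h1 : σ (Sum.inr j) = Sum.inr j := hemp j (by simp [f', hj])
      have hji : j ≠ i := by
        rintro rfl
        simp [hj] at hi
      rw [Equiv.Perm.mul_apply, h1, Equiv.swap_apply_of_ne_of_ne (by simp) (by simpa using hji)]

lemma perm_to_fam {k : ℕ} (n : ℕ) : ∀ (σ : Equiv.Perm (α ⊕ Fin k)), Good σ →
    (nfix σ).card = n →
    ∃ f : Fin k → Finset α, Fam f ∧ (∀ v, σ (Sum.inl v) ≠ Sum.inl v ↔ ∃ i, v ∈ f i) ∧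
      (∀ v i, σ (Sum.inl v) = Sum.inr i → ∀ w ∈ f i, w ≤ v) ∧
      (∀ i j, σ (Sum.inr j) = Sum.inr i → f i = ∅) := by
  induction n with
  | zero =>
    intro σ hg hc
    have he : ∀ v, σ (Sum.inl v) = Sum.inl v := by
      intro v
      by_contra h
      have : v ∈ nfix σ := by simp [nfix, h]
      rw [Finset.card_eq_zero] at hc
      simp [hc] at this
    refine ⟨fun _ => ∅, ⟨?_, ?_⟩, ?_, ?_, ?_⟩
    · intro i; simp
    · intro a b _; simp [Function.onFun]
    · simp [he]
    · simp
    · simp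
  | succ n ih =>
    intro σ hg hc
    have hne : (nfix σ).Nonempty := by
      rw [← Finset.card_pos]; omega
    obtain ⟨x, hx⟩ := Finset.exists_maximal hne
    have hxn : σ (Sum.inl x) ≠ Sum.inl x := by simpa [nfix] using hx.1
    obtain ⟨i, hi⟩ : ∃ i, σ (Sum.inl x) = Sum.inr i := by
      rcases h : σ (Sum.inl x) with w | i
      · exfalso
        have hxw := hg x w h
        have hwx : w ≠ x := by rintro rfl; exact hxn h
        have hw : w ∈ nfix σ := by
          simp only [nfix, Finset.mem_filter, Finset.mem_univ, true_and]
          intro h2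
          exact hwx (Sum.inl.inj (σ.injective (h2.trans h.symm)))
        exact hwx (le_antisymm (hx.2 hw hxw) hxw)
      · exact ⟨i, rfl⟩
    have hni : ∀ v, v ≠ x → σ (Sum.inl v) ≠ Sum.inr i := by
      intro v hv h
      rw [← hi] at h
      exact hv (Sum.inl.inj (σ.injective h))
    have hnr : ∀ j, σ (Sum.inr j) ≠ Sum.inr i := by
      intro v h
      rw [← hi] at h
      simpa using (σ.injective h)
    set τ : Equiv.Perm (α ⊕ Fin k) := Equiv.swap (Sum.inl x) (Sum.inr i) * σ with hτ
    have tx : τ (Sum.inl x) = Sum.inl x := by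
      rw [hτ, Equiv.Perm.mul_apply, hi, Equiv.swap_apply_right]
    have tv : ∀ v, v ≠ x → σ (Sum.inl v) ≠ Sum.inl x → τ (Sum.inl v) = σ (Sum.inl v) := by
      intro v hv h
      rw [hτ, Equiv.Perm.mul_apply, Equiv.swap_apply_of_ne_of_ne h (hni v hv)]
    have tv' : ∀ v, σ v = Sum.inl x → τ v = Sum.inr i := by
      intro v h
      rw [hτ, Equiv.Perm.mul_apply, h, Equiv.swap_apply_left]
    have tr : ∀ j, σ (Sum.inr j) ≠ Sum.inl x → τ (Sum.inr j) = σ (Sum.inr j) := by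
      intro v h
      rw [hτ, Equiv.Perm.mul_apply, Equiv.swap_apply_of_ne_of_ne h (hnr v)]
    have hnfτ : ∀ v, v ≠ x → (τ (Sum.inl v) ≠ Sum.inl v ↔ σ (Sum.inl v) ≠ Sum.inl v) := by
      intro v hv
      by_cases h : σ (Sum.inl v) = Sum.inl x
      · rw [tv' _ h, h]; simp [Ne.symm hv]
      · rw [tv v hv h]
    have hgτ : Good τ := by
      intro v w h
      by_cases hv : v = x
      · subst hv; rw [tx] at h; exact (Sum.inl.inj h).le
      · by_cases h2 : σ (Sum.inl v) = Sum.inl x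
        · rw [tv' _ h2] at h; cases h
        · rw [tv v hv h2] at h; exact hg v w h
    have hcτ : (nfix τ).card = n := by
      have : nfix τ = (nfix σ).erase x := by
        ext v
        simp only [nfix, Finset.mem_erase, Finset.mem_filter, Finset.mem_univ, true_and]
        by_cases hv : v = x
        · subst hv; simp [tx]
        · rw [hnfτ v hv]; simp [hv]
      rw [this, Finset.card_erase_of_mem hx.1, hc]; rfl
    obtain ⟨f, hf, hnf, htop, hemp⟩ := ih τ hgτ hcτ
    have hxf : ∀ j, x ∉ f j := by
      intro j hj
      exact (hnf x).2 ⟨j, hj⟩ tx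
    have hlx : ∀ w ∈ f i, w ≤ x := by
      intro w hw
      rcases hu : σ.symm (Sum.inl x) with u | j
      · have hu' : σ (Sum.inl u) = Sum.inl x := by rw [← hu]; simp
        exact (htop u i (tv' _ hu') w hw).trans (hg u x hu')
      · have hu' : σ (Sum.inr j) = Sum.inl x := by rw [← hu]; simp
        have := hemp i j (tv' _ hu')
        simp [this] at hw
    let f' : Fin k → Finset α := fun j => if j = i then insert x (f j) else f j
    have hmem : ∀ v j, v ∈ f' j ↔ v ∈ f j ∨ (v = x ∧ j = i) := by
      intro v j
      by_cases h : j = i <;> simp [f', h, or_comm]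
    refine ⟨f', ⟨?_, ?_⟩, ?_, ?_, ?_⟩
    · intro j a ha b hb hab
      rw [Finset.mem_coe, hmem] at ha hb
      rcases ha with ha | ⟨rfl, rfl⟩ <;> rcases hb with hb | ⟨rfl, h⟩
      · exact hf.1 j ha hb hab
      · subst h; exact Or.inl (hlx a ha)
      · exact Or.inr (hlx b hb)
      · exact absurd rfl hab
    · intro a b hab
      refine Finset.disjoint_left.2 ?_
      intro v ha hb
      rw [hmem] at ha hb
      rcases ha with ha | ⟨rfl, rfl⟩ <;> rcases hb with hb | ⟨h1, h⟩
      · exact hab (fam_disj hf ha hb)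
      · subst h1; exact hxf _ ha
      · exact hxf _ hb
      · exact hab h.symm
    · intro v
      by_cases hv : v = x
      · subst hv
        simp only [hxn, ne_eq, not_false_eq_true, true_iff]
        exact ⟨i, (hmem _ _).2 (Or.inr ⟨rfl, rfl⟩)⟩
      · rw [← hnfτ v hv, hnf]
        simp [hmem, hv]
    · intro v j h w hw
      rw [hmem] at hw
      by_cases hv : v = x
      · subst hv
        rw [hi] at h
        cases h
        rcases hw with hw | ⟨rfl, _⟩
        · exact hlx w hw
        · exact le_rfl
      · have hji : j ≠ i := by rintro rfl; exact hni v hv h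
        rcases hw with hw | ⟨_, h2⟩
        · refine htop v j ?_ w hw
          rw [tv v hv (by rw [h]; simp), h]
        · exact absurd h2 hji
    · intro a j h
      have hji : a ≠ i := by rintro rfl; exact hnr j h
      have := hemp a j (by rw [tr j (by rw [h]; simp), h])
      simp [f', hji, this]

lemma exists_inv {β : Type*} [Fintype β] [DecidableEq β] (h : Equiv.Perm β) (p d : β)
    (hpd : p ≠ d) :
    ∃ A : Set β, p ∈ A ∧ d ∉ A ∧
      ((∀ x ∈ A, h x ∈ A) ∨ (∀ x ∈ A, (Equiv.swap p d * h) x ∈ A)) := by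
  by_cases hs : ∃ m : ℕ, (h ^ m) p = d
  · classical
    let m := Nat.find hs
    have hm : (h ^ m) p = d := Nat.find_spec hs
    have hmin : ∀ j, j < m → (h ^ j) p ≠ d := fun j hj => Nat.find_min hs hj
    have hm0 : 0 < m := by
      rcases Nat.eq_zero_or_pos m with h0 | h0
      · rw [h0] at hm; exact absurd hm hpd
      · exact h0
    refine ⟨{x | ∃ i < m, (h ^ i) p = x}, ⟨0, hm0, rfl⟩, ?_, Or.inr ?_⟩
    · rintro ⟨i, hi, hid⟩
      exact hmin i hi hid
    · rintro x ⟨i, hi, rfl⟩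
      have e : h ((h ^ i) p) = (h ^ (i+1)) p := by rw [pow_succ', Equiv.Perm.mul_apply]
      rw [Equiv.Perm.mul_apply, e]
      by_cases him : i + 1 = m
      · rw [him, hm, Equiv.swap_apply_right]
        exact ⟨0, hm0, rfl⟩
      · have hlt : i + 1 < m := by omega
        rw [Equiv.swap_apply_of_ne_of_ne]
        · exact ⟨i+1, hlt, rfl⟩
        · intro hp
          apply hmin (m - (i+1)) (by omega)
          have : (h ^ m) p = (h ^ (m - (i+1))) ((h ^ (i+1)) p) := by
            rw [← Equiv.Perm.mul_apply, ← pow_add]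
            congr 2; omega
          rw [hp, hm] at this
          exact this.symm
        · exact hmin _ hlt
  · refine ⟨{x | ∃ i : ℕ, (h ^ i) p = x}, ⟨0, rfl⟩, ?_, Or.inl ?_⟩
    · exact hs
    · rintro x ⟨i, rfl⟩
      exact ⟨i+1, by rw [pow_succ', Equiv.Perm.mul_apply]⟩

lemma exchange_aux {k : ℕ} (F G : Equiv.Perm (α ⊕ Fin k)) (hF : Good F) (hG : Good G)
    (A : Set (α ⊕ Fin k)) (hA : ∀ x ∈ A, (G⁻¹ * F) x ∈ A) :
    ∃ F' G' : Equiv.Perm (α ⊕ Fin k), Good F' ∧ Good G' ∧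
      (∀ x ∈ A, G' x = F x) ∧ (∀ x, x ∉ A → G' x = G x) ∧
      (nfix F).card + (nfix G).card = (nfix F').card + (nfix G').card := by
  classical
  have hA' : ∀ x, (G⁻¹ * F) x ∈ A → x ∈ A := by
    intro x hx
    have := Equiv.Perm.perm_symm_on_of_perm_on_finite (f := G⁻¹ * F) (p := fun y => y ∈ A)
      (fun y hy => hA y hy) hx
    rwa [Equiv.symm_apply_apply] at this
  have key : ∀ x ∈ A, ∀ y, y ∉ A → G x ≠ F y := by
    intro x hx y hy h
    apply hy; apply hA'
    rw [Equiv.Perm.mul_apply, ← h]; simpa using hx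
  have key2 : ∀ x ∈ A, ∀ y, y ∉ A → F x ≠ G y := by
    intro x hx y hy h
    apply hy
    have := hA x hx
    rw [Equiv.Perm.mul_apply, h] at this; simpa using this
  have i1 : Function.Injective (fun x => if x ∈ A then G x else F x) := by
    intro x y h
    by_cases hx : x ∈ A <;> by_cases hy : y ∈ A <;> simp only [hx, hy, if_true, if_false] at h
    · exact G.injective h
    · exact absurd h (key x hx y hy)
    · exact absurd h.symm (key y hy x hx)
    · exact F.injective h
  have i2 : Function.Injective (fun x => if x ∈ A then F x else G x) := by
    intro x y h
    by_cases hx : x ∈ A <;> by_cases hy : y ∈ A <;> simp only [hx, hy, if_true, if_false] at h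
    · exact F.injective h
    · exact absurd h (key2 x hx y hy)
    · exact absurd h.symm (key2 y hy x hx)
    · exact G.injective h
  refine ⟨Equiv.ofBijective _ (Finite.injective_iff_bijective.1 i1),
    Equiv.ofBijective _ (Finite.injective_iff_bijective.1 i2), ?_, ?_, ?_, ?_, ?_⟩
  · intro v w h
    by_cases hv : Sum.inl v ∈ A <;> simp [hv] at h
    · exact hG v w h
    · exact hF v w h
  · intro v w h
    by_cases hv : Sum.inl v ∈ A <;> simp [hv] at h
    · exact hF v w h
    · exact hG v w h
  · intro x hx; simp [hx]
  · intro x hx; simp [hx]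
  · simp only [nfix, Finset.card_filter, ← Finset.sum_add_distrib]
    apply Finset.sum_congr rfl
    intro v _
    by_cases hv : Sum.inl v ∈ A <;> simp [hv, add_comm]

lemma exchange {k : ℕ} (F G : Equiv.Perm (α ⊕ Fin k)) (hF : Good F) (hG : Good G)
    (p : α) (d e : Fin k) (hFp : F (Sum.inl p) = Sum.inl p) (hGp : G (Sum.inl p) = Sum.inr e)
    (hGd : G (Sum.inr d) = Sum.inr d) :
    ∃ F' G' : Equiv.Perm (α ⊕ Fin k), Good F' ∧ Good G' ∧
      G' (Sum.inl p) = Sum.inl p ∧ G' (Sum.inr d) = Sum.inr d ∧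
      (nfix F).card + (nfix G).card = (nfix F').card + (nfix G').card := by
  obtain ⟨A, hpA, hdA, hA⟩ := exists_inv (G⁻¹ * F) (Sum.inl p) (Sum.inr d) (by simp)
  rcases hA with hA | hA
  · obtain ⟨F', G', h1, h2, h3, h4, h5⟩ := exchange_aux F G hF hG A hA
    exact ⟨F', G', h1, h2, by rw [h3 _ hpA, hFp], by rw [h4 _ hdA, hGd], h5⟩
  · set F₁ : Equiv.Perm (α ⊕ Fin k) := Equiv.swap (Sum.inr e) (Sum.inr d) * F with hF₁
    have hfa : ∀ x w, F₁ x = Sum.inl w ↔ F x = Sum.inl w := by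
      intro x w
      rw [hF₁, Equiv.Perm.mul_apply, Equiv.swap_apply_def]
      split_ifs with h1 h2
      · simp [h1]
      · simp [h2]
      · rfl
    have hg1 : Good F₁ := fun v w h => hF v w ((hfa _ _).1 h)
    have hn1 : nfix F₁ = nfix F := by
      ext v; simp [nfix, hfa]
    have heq : Equiv.swap (Sum.inl p) (Sum.inr d) * (G⁻¹ * F) = G⁻¹ * F₁ := by
      have : Equiv.swap (G (Sum.inl p)) (G (Sum.inr d)) =
          G * Equiv.swap (Sum.inl p) (Sum.inr d) * G⁻¹ := by
        exact Equiv.swap_apply_apply G _ _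
      rw [hGp, hGd] at this
      rw [hF₁, this]; group
    rw [heq] at hA
    obtain ⟨F', G', h1, h2, h3, h4, h5⟩ := exchange_aux F₁ G hg1 hG A hA
    exact ⟨F', G', h1, h2, by rw [h3 _ hpA, hfa, hFp], by rw [h4 _ hdA, hGd], by rw [← h5, hn1]⟩

lemma bdd (k : ℕ) : BddAbove {n : ℕ | ∃ f : Fin k → Finset α,
    (∀ i, IsChain (· ≤ ·) (↑(f i) : Set α)) ∧
    Pairwise (Function.onFun Disjoint f) ∧
    n = (Finset.univ.biUnion f).card} := by
  refine ⟨Fintype.card α, ?_⟩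
  rintro n ⟨f, -, -, rfl⟩
  exact Finset.card_le_univ _

lemma le_cMax {k : ℕ} (f : Fin k → Finset α) (hf : Fam f) :
    (Finset.univ.biUnion f).card ≤ cMax α k :=
  le_csSup (bdd k) ⟨f, hf.1, hf.2, rfl⟩

lemma exists_cMax (α : Type*) [PartialOrder α] [Fintype α] [DecidableEq α] (k : ℕ) :
    ∃ f : Fin k → Finset α, Fam f ∧ (Finset.univ.biUnion f).card = cMax α k := by
  have := Nat.sSup_mem (s := {n : ℕ | ∃ f : Fin k → Finset α,
    (∀ i, IsChain (· ≤ ·) (↑(f i) : Set α)) ∧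
    Pairwise (Function.onFun Disjoint f) ∧
    n = (Finset.univ.biUnion f).card}) ⟨0, fun _ => ∅, by simp, fun a b _ => by simp [Function.onFun],
      by
        symm
        rw [Finset.card_eq_zero]
        ext v
        simp⟩ (bdd k)
  obtain ⟨f, h1, h2, h3⟩ := this
  exact ⟨f, ⟨h1, h2⟩, h3.symm⟩

lemma le_cMax_sub (p : α) {k : ℕ} (f : Fin k → Finset α) (hf : Fam f) (hp : ∀ i, p ∉ f i) :
    (Finset.univ.biUnion f).card ≤ cMax {x : α // x ≠ p} k := by
  let g : Fin k → Finset {x : α // x ≠ p} := fun i => (f i).subtype _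
  have hg : Fam g := by
    refine ⟨?_, ?_⟩
    · intro i a ha b hb hab
      simp only [g, Finset.mem_coe, Finset.mem_subtype] at ha hb
      exact hf.1 i ha hb (fun h => hab (Subtype.ext h))
    · intro i j hij
      refine Finset.disjoint_left.2 ?_
      intro a ha hb
      simp only [g, Finset.mem_subtype] at ha hb
      exact hij (fam_disj hf ha hb)
  refine le_trans (le_of_eq ?_) (le_cMax g hg)
  have : Finset.univ.biUnion f = (Finset.univ.biUnion g).map (Function.Embedding.subtype _) := by
    ext v
    simp only [Finset.mem_biUnion, Finset.mem_univ, true_and, Finset.mem_map, g,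
      Finset.mem_subtype, Function.Embedding.coe_subtype]
    constructor
    · rintro ⟨i, hi⟩
      exact ⟨⟨v, by rintro rfl; exact hp i hi⟩, ⟨i, hi⟩, rfl⟩
    · rintro ⟨a, ⟨i, hi⟩, rfl⟩
      exact ⟨i, hi⟩
  rw [this, Finset.card_map]

lemma exists_cMax_sub (p : α) (k : ℕ) :
    ∃ f : Fin k → Finset α, Fam f ∧ (∀ i, p ∉ f i) ∧
      (Finset.univ.biUnion f).card = cMax {x : α // x ≠ p} k := by
  obtain ⟨g, hg, hc⟩ := exists_cMax {x : α // x ≠ p} k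
  refine ⟨fun i => (g i).map (Function.Embedding.subtype _), ⟨?_, ?_⟩, ?_, ?_⟩
  · intro i a ha b hb hab
    simp only [Finset.coe_map, Set.mem_image, Finset.mem_coe] at ha hb
    obtain ⟨a, ha, rfl⟩ := ha
    obtain ⟨b, hb, rfl⟩ := hb
    exact hg.1 i ha hb (fun h => hab (by rw [h]))
  · intro i j hij
    exact (Finset.disjoint_map _).2 (hg.2 hij)
  · intro i; simp
  · rw [← hc, ← Finset.card_map (Function.Embedding.subtype _)]
    congr 1
    ext v; simp; tauto

lemma card_nfix {k : ℕ} {σ : Equiv.Perm (α ⊕ Fin k)} {f : Fin k → Finset α}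
    (h : ∀ v, σ (Sum.inl v) ≠ Sum.inl v ↔ ∃ i, v ∈ f i) :
    Finset.univ.biUnion f = nfix σ := by
  ext v
  simp only [nfix, Finset.mem_biUnion, Finset.mem_univ, true_and, Finset.mem_filter, h]

lemma sub_le (p : α) (k : ℕ) : cMax {x : α // x ≠ p} k ≤ cMax α k := by
  obtain ⟨f, hf, -, hc⟩ := exists_cMax_sub p k
  rw [← hc]; exact le_cMax f hf

lemma le_sub_add (p : α) (k : ℕ) : cMax α k ≤ cMax {x : α // x ≠ p} k + 1 := by
  obtain ⟨f, hf, hc⟩ := exists_cMax α k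
  have := le_cMax_sub p (fun j => (f j).erase p) ⟨fun j => (hf.1 j).mono (by simp), fun a b hab =>
    Finset.disjoint_of_subset_left (Finset.erase_subset _ _)
          (Finset.disjoint_of_subset_right (Finset.erase_subset _ _) (hf.2 hab))⟩ (by simp)
  have h2 : Finset.univ.biUnion (fun j => (f j).erase p) = (Finset.univ.biUnion f).erase p := by
    ext v; simp
  rw [h2] at this
  have := Finset.pred_card_le_card_erase (s := Finset.univ.biUnion f) (a := p)
  omega

lemma step (p : α) (hp : ∀ x : α, p ≤ x → x = p) (k : ℕ) :
    cMax {x : α // x ≠ p} (k+1) + cMax α k ≤ cMax α (k+1) + cMax {x : α // x ≠ p} k := by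
  obtain ⟨f, hf, hfp, hfc⟩ := exists_cMax_sub p (k+1)
  obtain ⟨g, hg, hgc⟩ := exists_cMax α k
  by_cases hgp : ∀ i, p ∉ g i
  · have := le_cMax_sub p g hg hgp
    have := sub_le p (k+1)
    omega
  push Not at hgp
  obtain ⟨e, he⟩ := hgp
  let g' : Fin (k+1) → Finset α := Fin.snoc (α := fun _ => Finset α) g ∅
  have hl : g' (Fin.last k) = ∅ := by simp [g']
  have hcs : ∀ i : Fin k, g' i.castSucc = g i := by intro i; simp [g']
  have hg' : Fam g' := by
    refine ⟨?_, ?_⟩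
    · intro i
      induction i using Fin.lastCases with
      | last => rw [hl]; simp
      | cast i => rw [hcs]; exact hg.1 i
    · intro i j hij
      unfold Function.onFun
      induction i using Fin.lastCases with
      | last => rw [hl]; simp
      | cast i =>
        induction j using Fin.lastCases with
        | last => rw [hl]; simp
        | cast j =>
          rw [hcs, hcs]
          exact hg.2 (fun h => hij (by rw [h]))
  have hgu : Finset.univ.biUnion g' = Finset.univ.biUnion g := by
    ext v
    simp [Fin.exists_fin_succ', hl, hcs]
  obtain ⟨F, hF, hFn, -, -⟩ := fam_to_perm _ f hf rfl
  obtain ⟨G, hG, hGn, -, hGe⟩ := fam_to_perm _ g' hg' rfl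
  have hFp : F (Sum.inl p) = Sum.inl p := by
    by_contra h
    obtain ⟨i, hi⟩ := (hFn p).1 h
    exact hfp i hi
  have hGp' : G (Sum.inl p) ≠ Sum.inl p := (hGn p).2 ⟨e.castSucc, by rw [hcs]; exact he⟩
  obtain ⟨d, hd⟩ : ∃ d, G (Sum.inl p) = Sum.inr d := by
    rcases h : G (Sum.inl p) with w | d
    · have := hp w (hG p w h)
      subst this
      exact absurd h hGp'
    · exact ⟨d, rfl⟩
  obtain ⟨F', G', hF', hG', hp', hl', hcard⟩ :=
    exchange F G hF hG p (Fin.last k) d hFp hd (hGe _ hl)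
  obtain ⟨f₁, hf₁, hfn₁, -, -⟩ := perm_to_fam _ F' hF' rfl
  obtain ⟨g₁, hg₁, hgn₁, -, hge₁⟩ := perm_to_fam _ G' hG' rfl
  have hl1 : g₁ (Fin.last k) = ∅ := hge₁ _ _ hl'
  have b1 := le_cMax f₁ hf₁
  have b2 := le_cMax_sub p (fun i : Fin k => g₁ i.castSucc)
    ⟨fun i => hg₁.1 _, fun i j hij => hg₁.2 (fun h => hij (Fin.castSucc_injective _ h))⟩
    (fun i hi => (hgn₁ p).2 ⟨_, hi⟩ hp')
  have hgu1 : Finset.univ.biUnion (fun i : Fin k => g₁ i.castSucc) = Finset.univ.biUnion g₁ := by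
    ext v
    simp [Fin.exists_fin_succ', hl1]
  rw [hgu1, card_nfix hgn₁] at b2
  rw [card_nfix hfn₁] at b1
  rw [card_nfix hFn] at hfc
  rw [← hgu, card_nfix hGn] at hgc
  omega

lemma exists_drop (p : α) : ∃ k, cMax {x : α // x ≠ p} k ≠ cMax α k := by
  refine ⟨Fintype.card α, ?_⟩
  have h1 := le_cMax (fun i : Fin (Fintype.card α) => {(Fintype.equivFin α).symm i})
    ⟨fun i => by simp, fun i j hij => by simp [Function.onFun, hij]⟩
  have h2 : Finset.univ.biUnion
      (fun i : Fin (Fintype.card α) => {(Fintype.equivFin α).symm i}) = Finset.univ := by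
    ext v
    simp only [Finset.mem_biUnion, Finset.mem_univ, true_and, Finset.mem_singleton, iff_true]
    exact ⟨Fintype.equivFin α v, by simp⟩
  rw [h2, Finset.card_univ] at h1
  obtain ⟨f, hf, hfp, hfc⟩ := exists_cMax_sub p (Fintype.card α)
  have : (Finset.univ.biUnion f).card < Fintype.card α := by
    apply Finset.card_lt_univ_of_notMem (x := p)
    simpa using hfp
  omega

end RemC

theorem removal_decreases_c_exactly_once
    (α : Type*) [PartialOrder α] [Fintype α] [DecidableEq α]
    (p : α) (hp : ∀ x : α, p ≤ x → x = p) :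
    ∃ K : ℕ, 1 ≤ K ∧
      (∀ i : ℕ, i < K → cMax {x : α // x ≠ p} i = cMax α i) ∧
      (∀ i : ℕ, K ≤ i → cMax {x : α // x ≠ p} i = cMax α i - 1) := by
  classical
  have hex := RemC.exists_drop p
  refine ⟨Nat.find hex, ?_, ?_, ?_⟩
  · by_contra h
    have h0 : Nat.find hex = 0 := by omega
    have := Nat.find_spec hex
    rw [h0] at this
    obtain ⟨f, -, hf⟩ := RemC.exists_cMax α 0
    obtain ⟨g, -, hg⟩ := RemC.exists_cMax {x : α // x ≠ p} 0
    apply this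
    rw [← hf, ← hg]
    simp
  · intro i hi
    have := Nat.find_min hex hi
    simpa using this
  · intro i hi
    suffices cMax {x : α // x ≠ p} i < cMax α i by
      have := RemC.le_sub_add p i
      omega
    induction i, hi using Nat.le_induction with
    | base => exact lt_of_le_of_ne (RemC.sub_le p _) (Nat.find_spec hex)
    | succ n _ ih =>
      have := RemC.step p hp n
      omega
end

section
/- Let p be a maximal element of a finite poset P, and suppose that for some fixed k, every maximal chain k-family of P (i.e., every family of k disjoint chains covering the maximum possible number c_k(P) of elements) covers p. Then for every k' ≥ k, every maximal chain k'-family of P covers p. -/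
open Finset

section Aux
open Equiv

variable {α ι : Type*} [PartialOrder α] [Fintype α] [DecidableEq α] [Fintype ι] [DecidableEq ι]

/-- A permutation encoding a chain family. -/
def KValid (σ : Perm (α ⊕ ι)) : Prop := ∀ x y : α, σ (Sum.inl x) = Sum.inl y → x ≤ y

/-- Covered elements. -/
def kcov (σ : Perm (α ⊕ ι)) : Finset α := univ.filter (fun x => σ (Sum.inl x) ≠ Sum.inl x)

theorem kperm_of_family (n : ℕ) : ∀ f : ι → Finset α, (univ.biUnion f).card = n →
    (∀ i, IsChain (· ≤ ·) (↑(f i) : Set α)) → Pairwise (Function.onFun Disjoint f) →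
    ∃ σ : Perm (α ⊕ ι), KValid σ ∧ kcov σ = univ.biUnion f ∧
      (∀ x j, σ (Sum.inl x) = Sum.inr j → x ∈ f j) ∧
      (∀ j, f j = ∅ → σ (Sum.inr j) = Sum.inr j) := by
  induction n with
  | zero =>
    intro f hf hc hd
    refine ⟨1, ?_, ?_, ?_, ?_⟩
    · intro x y h
      simp at h
      exact h.le
    · rw [Finset.card_eq_zero] at hf
      rw [hf]; simp [kcov]
    · simp
    · simp
  | succ n ih =>
    intro f hf hc hd
    have hne : (univ.biUnion f).Nonempty := by rw [← Finset.card_pos]; omega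
    obtain ⟨z, hz⟩ := hne
    obtain ⟨i, -, hi⟩ := Finset.mem_biUnion.1 hz
    obtain ⟨m, hm⟩ := (f i).exists_maximal ⟨z, hi⟩
    have hmi : m ∈ f i := hm.prop
    have hmax : ∀ x ∈ f i, x ≤ m := by
      intro x hx
      rcases (hc i).total hx hmi with h | h
      · exact h
      · exact hm.2 hx h
    have hmj : ∀ j, m ∈ f j → j = i := by
      intro j hj
      by_contra hne
      exact Finset.disjoint_left.1 (hd hne) hj hmi
    set f' : ι → Finset α := fun j => (f j).erase m with hf'
    have hU : univ.biUnion f' = (univ.biUnion f).erase m := by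
      ext x; simp [hf']
    obtain ⟨σ, h1, h2, h3, h4⟩ := ih f'
      (by rw [hU, Finset.card_erase_of_mem (Finset.mem_biUnion.2 ⟨i, mem_univ _, hmi⟩), hf]; rfl)
      (fun j => (hc j).mono (by simp [hf']))
      (fun a b hab => (hd hab).mono (Finset.erase_subset _ _) (Finset.erase_subset _ _))
    have hcv : ∀ x, σ (Sum.inl x) ≠ Sum.inl x ↔ x ∈ univ.biUnion f' := by
      intro x; rw [← h2]; simp [kcov]
    have hσm : σ (Sum.inl m) = Sum.inl m := by
      by_contra h
      have := (hcv m).1 h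
      rw [hU] at this
      simp at this
    have hinj : ∀ u, σ u = Sum.inl m → u = Sum.inl m := fun u hu =>
      σ.injective (hu.trans hσm.symm)
    refine ⟨swap (Sum.inl m) (Sum.inr i) * σ, ?_, ?_, ?_, ?_⟩
    · intro x y h
      rw [Perm.mul_apply] at h
      rcases hs : σ (Sum.inl x) with w | w
      · rw [hs] at h
        by_cases hw : w = m
        · subst hw; simp at h
        · rw [swap_apply_of_ne_of_ne (by simpa using hw) (by simp)] at h
          simp at h; subst h; exact h1 _ _ hs
      · rw [hs] at h
        by_cases hw : w = i
        · subst hw; simp at h; subst h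
          exact hmax _ (Finset.mem_of_mem_erase (h3 _ _ hs))
        · rw [swap_apply_of_ne_of_ne (by simp) (by simpa using hw)] at h
          simp at h
    · ext x
      have hx := hcv x
      rw [hU, Finset.mem_erase] at hx
      simp only [kcov, Finset.mem_filter, Finset.mem_univ, true_and]
      rw [Perm.mul_apply]
      by_cases hxm : x = m
      · subst hxm
        rw [hσm, swap_apply_left]
        simp; exact ⟨i, hmi⟩
      · rw [← and_iff_right (a := x ≠ m) (b := x ∈ univ.biUnion f) hxm, ← hx, not_iff_not]
        constructor
        · intro h
          rw [swap_apply_eq_iff, swap_apply_of_ne_of_ne (by simpa using hxm) (by simp)] at h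
          exact h
        · intro h
          rw [h, swap_apply_of_ne_of_ne (by simpa using hxm) (by simp)]
    · intro x j h
      rw [Perm.mul_apply, swap_apply_eq_iff] at h
      by_cases hj : j = i
      · subst hj
        rw [swap_apply_right] at h
        have := hinj _ h
        simp at this; subst this; exact hmi
      · rw [swap_apply_of_ne_of_ne (by simp) (by simpa using hj)] at h
        exact Finset.mem_of_mem_erase (h3 _ _ h)
    · intro j hj
      have hji : j ≠ i := by rintro rfl; rw [hj] at hmi; simp at hmi
      rw [Perm.mul_apply, h4 j (by simp [hf', hj]),
        swap_apply_of_ne_of_ne (by simp) (by simpa using hji)]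

theorem kfamily_of_perm (n : ℕ) : ∀ σ : Perm (α ⊕ ι), (kcov σ).card = n → KValid σ →
    ∃ f : ι → Finset α, (∀ i, IsChain (· ≤ ·) (↑(f i) : Set α)) ∧
      Pairwise (Function.onFun Disjoint f) ∧ univ.biUnion f = kcov σ ∧
      (∀ j, ∀ z ∈ f j, ∃ y ∈ f j, z ≤ y ∧ σ (Sum.inl y) = Sum.inr j) := by
  induction n with
  | zero =>
    intro σ hσ hv
    rw [Finset.card_eq_zero] at hσ
    refine ⟨fun _ => ∅, by simp, fun a b _ => by simp [Function.onFun], ?_, by simp⟩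
    rw [hσ]; ext; simp
  | succ n ih =>
    intro σ hσ hv
    have hne : (kcov σ).Nonempty := by rw [← Finset.card_pos]; omega
    obtain ⟨x, hx⟩ := (kcov σ).exists_maximal hne
    have hxc : σ (Sum.inl x) ≠ Sum.inl x := by simpa [kcov] using hx.prop
    obtain ⟨j, hj⟩ : ∃ j, σ (Sum.inl x) = Sum.inr j := by
      rcases hs : σ (Sum.inl x) with y | j
      · exfalso
        have hxy := hv _ _ hs
        have hyc : y ∈ kcov σ := by
          simp only [kcov, Finset.mem_filter, Finset.mem_univ, true_and]
          intro h
          have := σ.injective (h.trans hs.symm)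
          rw [this] at h
          exact hxc (hs.trans this)
        have := le_antisymm hxy (hx.2 hyc hxy)
        subst this; exact hxc hs
      · exact ⟨j, rfl⟩
    set τ := swap (Sum.inl x) (Sum.inr j) * σ with hτ
    have hτx : τ (Sum.inl x) = Sum.inl x := by simp [hτ, hj]
    have hτv : KValid τ := by
      intro y z h
      by_cases hz : z = x
      · subst hz
        have := τ.injective (h.trans hτx.symm)
        simp at this; exact this.le
      · rw [hτ, Perm.mul_apply, swap_apply_eq_iff,
          swap_apply_of_ne_of_ne (by simpa using hz) (by simp)] at h
        exact hv _ _ h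
    have hτc : kcov τ = (kcov σ).erase x := by
      ext y
      simp only [kcov, Finset.mem_filter, Finset.mem_univ, true_and, Finset.mem_erase]
      by_cases hy : y = x
      · subst hy; simp [hτx]
      · simp only [hy, ne_eq, not_false_eq_true, true_and, not_iff_not]
        rw [hτ, Perm.mul_apply, swap_apply_eq_iff,
          swap_apply_of_ne_of_ne (by simpa using hy) (by simp)]
    obtain ⟨f, h1, h2, h3, h4⟩ := ih τ
      (by rw [hτc, Finset.card_erase_of_mem hx.prop, hσ]; rfl) hτv
    have hxf : ∀ i, x ∉ f i := by
      intro i hi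
      have : x ∈ univ.biUnion f := Finset.mem_biUnion.2 ⟨i, mem_univ _, hi⟩
      rw [h3, hτc] at this; simp at this
    have hle : ∀ z ∈ f j, z ≤ x := by
      intro z hz
      obtain ⟨y, hy, hzy, hyj⟩ := h4 j z hz
      rw [hτ, Perm.mul_apply, swap_apply_eq_iff, swap_apply_right] at hyj
      exact hzy.trans (hv _ _ hyj)
    have hfu : ∀ l, Function.update f j (insert x (f j)) l =
        if l = j then insert x (f j) else f l := fun l => by
      rw [Function.update_apply]
    refine ⟨Function.update f j (insert x (f j)), ?_, ?_, ?_, ?_⟩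
    · intro l
      rw [hfu]
      split_ifs with h
      · rw [Finset.coe_insert]
        exact (h1 j).insert (fun b hb _ => Or.inr (hle b hb))
      · exact h1 l
    · intro a b hab
      have hd := h2 hab
      simp only [Function.onFun] at hd ⊢
      rw [hfu, hfu]
      split_ifs with ha hb hb
      · exact absurd (ha.trans hb.symm) hab
      · subst ha
        rw [Finset.disjoint_insert_left]; exact ⟨hxf _, hd⟩
      · subst hb
        rw [Finset.disjoint_insert_right]; exact ⟨hxf _, hd⟩
      · exact hd
    · have : kcov σ = insert x (kcov τ) := by rw [hτc, Finset.insert_erase hx.prop]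
      rw [this, ← h3]
      ext y
      simp only [Finset.mem_biUnion, Finset.mem_univ, true_and, Finset.mem_insert, hfu]
      constructor
      · rintro ⟨l, hl⟩
        split_ifs at hl with h
        · rcases Finset.mem_insert.1 hl with h | h
          · exact Or.inl h
          · exact Or.inr ⟨j, h⟩
        · exact Or.inr ⟨l, hl⟩
      · rintro (h | ⟨l, hl⟩)
        · exact ⟨j, by simp [h]⟩
        · refine ⟨l, ?_⟩
          split_ifs with h
          · subst h; exact Finset.mem_insert_of_mem hl
          · exact hl
    · intro l z hz
      rw [hfu] at hz ⊢
      split_ifs at hz ⊢ with h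
      · subst h
        refine ⟨x, Finset.mem_insert_self _ _, ?_, hj⟩
        rcases Finset.mem_insert.1 hz with h | h
        · exact h.le
        · exact hle _ h
      · obtain ⟨y, hy, hzy, hyl⟩ := h4 l z hz
        refine ⟨y, hy, hzy, ?_⟩
        rw [hτ, Perm.mul_apply, swap_apply_eq_iff,
          swap_apply_of_ne_of_ne (by simp) (by simpa using h)] at hyl
        exact hyl

theorem kexchange (e : ι) (p : α) (hp : ∀ x : α, p ≤ x → x = p) (φ γ : Perm (α ⊕ ι))
    (hφ : KValid φ) (hγ : KValid γ) (hγe : γ (Sum.inr e) = Sum.inr e)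
    (hφp : p ∉ kcov φ) (hγp : p ∈ kcov γ) :
    ∃ F G : Perm (α ⊕ ι), KValid F ∧ KValid G ∧ F (Sum.inr e) = Sum.inr e ∧ p ∉ kcov F ∧
      (kcov F).card + (kcov G).card = (kcov φ).card + (kcov γ).card := by
  simp only [kcov, Finset.mem_filter, Finset.mem_univ, true_and, not_not] at hφp hγp
  obtain ⟨c, hc⟩ : ∃ c, γ (Sum.inl p) = Sum.inr c := by
    rcases hs : γ (Sum.inl p) with y | c
    · have := hp _ (hγ _ _ hs)
      subst this; exact absurd hs hγp
    · exact ⟨c, rfl⟩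
  have hce : c ≠ e := by
    rintro rfl
    have := γ.injective (hc.trans hγe.symm)
    simp at this
  set ψ := φ * γ⁻¹ with hψ
  have hex : ∃ m : ℕ, ∃ d, (ψ ^ (m + 1)) (Sum.inr e) = Sum.inr d := by
    refine ⟨orderOf ψ - 1, e, ?_⟩
    rw [Nat.sub_add_cancel (orderOf_pos ψ), pow_orderOf_eq_one]; rfl
  classical
  set m := Nat.find hex with hm
  obtain ⟨d, hd⟩ := Nat.find_spec hex
  rw [← hm] at hd
  have hmin : ∀ j < m, ∀ d, (ψ ^ (j + 1)) (Sum.inr e) ≠ Sum.inr d := by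
    intro j hj d h
    exact Nat.find_min hex hj ⟨d, h⟩
  set φ' := swap (Sum.inr d) (Sum.inr e) * φ with hφ'
  set ψ' := swap (Sum.inr d) (Sum.inr e) * ψ with hψ'
  have hswl : ∀ u (y : α), swap (Sum.inr d : α ⊕ ι) (Sum.inr e) u = Sum.inl y ↔ u = Sum.inl y := by
    intro u y
    rw [swap_apply_eq_iff, swap_apply_of_ne_of_ne (by simp) (by simp)]
  have hφ'l : ∀ u y, φ' u = Sum.inl y ↔ φ u = Sum.inl y := by
    intro u y
    rw [hφ', Perm.mul_apply, hswl]
  have hcyc : ∀ n : ℕ, ∃ j ≤ m, (ψ' ^ n) (Sum.inr e) = (ψ ^ j) (Sum.inr e) := by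
    intro n
    induction n with
    | zero => exact ⟨0, Nat.zero_le _, rfl⟩
    | succ n ih =>
      obtain ⟨j, hj, h⟩ := ih
      have h' : (ψ' ^ (n + 1)) (Sum.inr e) =
          swap (Sum.inr d) (Sum.inr e) ((ψ ^ (j + 1)) (Sum.inr e)) := by
        rw [pow_succ' ψ', Perm.mul_apply ψ', h, hψ', Perm.mul_apply (swap _ _), pow_succ' ψ,
          Perm.mul_apply ψ]
      rcases hj.lt_or_eq with hlt | heq
      · refine ⟨j + 1, hlt, ?_⟩
        rw [h']
        exact swap_apply_of_ne_of_ne (hmin j hlt _) (hmin j hlt _)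
      · refine ⟨0, Nat.zero_le _, ?_⟩
        rw [h', heq, hd, swap_apply_left]; rfl
  have hsame : ¬ ψ'.SameCycle (Sum.inr e) (γ (Sum.inl p)) := by
    intro h
    obtain ⟨n, -, -, hn⟩ := h.exists_pow_eq''
    obtain ⟨j, hj, h2⟩ := hcyc n
    rw [hn, hc] at h2
    rcases j with _ | j
    · simp at h2; exact hce h2
    · exact hmin j hj _ h2.symm
  have hψφ : ∀ u, ψ' (γ u) = φ' u := by
    intro u; simp [hψ', hφ', hψ]
  set θ := ψ'.cycleOf (Sum.inr e) with hθ
  have hcase : ∀ u, (ψ'.SameCycle (Sum.inr e) (γ u) ∧ (θ⁻¹ * φ') u = γ u ∧ (θ * γ) u = φ' u) ∨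
      (¬ ψ'.SameCycle (Sum.inr e) (γ u) ∧ (θ⁻¹ * φ') u = φ' u ∧ (θ * γ) u = γ u) := by
    intro u
    by_cases h : ψ'.SameCycle (Sum.inr e) (γ u)
    · left
      refine ⟨h, ?_, ?_⟩
      · rw [Perm.mul_apply, Perm.inv_eq_iff_eq, hθ, h.cycleOf_apply, hψφ]
      · rw [Perm.mul_apply, hθ, h.cycleOf_apply, hψφ]
    · right
      refine ⟨h, ?_, ?_⟩
      · rw [Perm.mul_apply, Perm.inv_eq_iff_eq, hθ, Perm.cycleOf_apply_of_not_sameCycle]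
        rw [← hψφ]
        rwa [Perm.sameCycle_apply_right]
      · rw [Perm.mul_apply, hθ, Perm.cycleOf_apply_of_not_sameCycle h]
  refine ⟨θ⁻¹ * φ', θ * γ, ?_, ?_, ?_, ?_, ?_⟩
  · intro x y h
    rcases hcase (Sum.inl x) with ⟨-, h1, -⟩ | ⟨-, h1, -⟩
    · exact hγ _ _ (h1.symm.trans h)
    · exact hφ _ _ ((hφ'l _ _).1 (h1.symm.trans h))
  · intro x y h
    rcases hcase (Sum.inl x) with ⟨-, -, h1⟩ | ⟨-, -, h1⟩
    · exact hφ _ _ ((hφ'l _ _).1 (h1.symm.trans h))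
    · exact hγ _ _ (h1.symm.trans h)
  · rcases hcase (Sum.inr e) with ⟨-, h1, -⟩ | ⟨h, -, -⟩
    · rw [h1, hγe]
    · exact absurd (by rw [hγe]) h
  · simp only [kcov, Finset.mem_filter, Finset.mem_univ, true_and, not_not]
    rcases hcase (Sum.inl p) with ⟨h, -, -⟩ | ⟨-, h1, -⟩
    · exact absurd h hsame
    · rw [h1, hφ'l, hφp]
  · simp only [kcov, Finset.card_filter, ← Finset.sum_add_distrib]
    refine Finset.sum_congr rfl fun x _ => ?_
    have hx : φ' (Sum.inl x) ≠ Sum.inl x ↔ φ (Sum.inl x) ≠ Sum.inl x := not_congr (hφ'l _ _)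
    rcases hcase (Sum.inl x) with ⟨-, h1, h2⟩ | ⟨-, h1, h2⟩
    · simp only [h1, h2, hx]; rw [add_comm]
    · simp only [h1, h2, hx]

theorem kcMax_bdd (k : ℕ) : BddAbove {n : ℕ | ∃ f : Fin k → Finset α,
    (∀ i, IsChain (· ≤ ·) (↑(f i) : Set α)) ∧
    Pairwise (Function.onFun Disjoint f) ∧
    n = (Finset.univ.biUnion f).card} := by
  refine ⟨Fintype.card α, ?_⟩
  rintro n ⟨f, -, -, rfl⟩
  exact Finset.card_le_univ _

theorem kle_cMax {k : ℕ} (f : Fin k → Finset α) (h1 : ∀ i, IsChain (· ≤ ·) (↑(f i) : Set α))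
    (h2 : Pairwise (Function.onFun Disjoint f)) : (univ.biUnion f).card ≤ cMax α k :=
  le_csSup (kcMax_bdd k) ⟨f, h1, h2, rfl⟩

theorem kexists_cMax (k : ℕ) : ∃ f : Fin k → Finset α,
    (∀ i, IsChain (· ≤ ·) (↑(f i) : Set α)) ∧
    Pairwise (Function.onFun Disjoint f) ∧ (univ.biUnion f).card = cMax α k := by
  obtain ⟨f, h1, h2, h3⟩ := Nat.sSup_mem (s := {n : ℕ | ∃ f : Fin k → Finset α,
    (∀ i, IsChain (· ≤ ·) (↑(f i) : Set α)) ∧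
    Pairwise (Function.onFun Disjoint f) ∧
    n = (Finset.univ.biUnion f).card})
    ⟨_, fun _ => ∅, by simp, fun a b _ => by simp [Function.onFun], rfl⟩ (kcMax_bdd k)
  exact ⟨f, h1, h2, h3.symm⟩

theorem kstep (p : α) (hp : ∀ x : α, p ≤ x → x = p) (k : ℕ)
    (hcov : ∀ f : Fin k → Finset α,
      (∀ i, IsChain (· ≤ ·) (↑(f i) : Set α)) →
      Pairwise (Function.onFun Disjoint f) →
      (Finset.univ.biUnion f).card = cMax α k →
      p ∈ Finset.univ.biUnion f) (f : Fin (k + 1) → Finset α)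
    (h1 : ∀ i, IsChain (· ≤ ·) (↑(f i) : Set α))
    (h2 : Pairwise (Function.onFun Disjoint f))
    (h3 : (Finset.univ.biUnion f).card = cMax α (k + 1)) :
    p ∈ Finset.univ.biUnion f := by
  by_contra hpf
  obtain ⟨g, g1, g2, g3⟩ := kexists_cMax (α := α) k
  have hpg := hcov g g1 g2 g3
  obtain ⟨φ, hφ, hφc, -, -⟩ := kperm_of_family _ f rfl h1 h2
  set g' : Fin (k + 1) → Finset α := Fin.snoc (α := fun _ => Finset α) g ∅ with hg'
  have gl : g' (Fin.last k) = ∅ := by simp [hg']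
  have gc : ∀ i : Fin k, g' i.castSucc = g i := by intro i; simp [hg']
  have gU : univ.biUnion g' = univ.biUnion g := by
    ext x
    simp only [Finset.mem_biUnion, Finset.mem_univ, true_and]
    constructor
    · rintro ⟨i, hi⟩
      induction i using Fin.lastCases with
      | last => rw [gl] at hi; simp at hi
      | cast i => exact ⟨i, by rwa [gc] at hi⟩
    · rintro ⟨i, hi⟩; exact ⟨i.castSucc, by rwa [gc]⟩
  obtain ⟨γ, hγ, hγc, -, hγe⟩ := kperm_of_family _ g' rfl
    (by
      intro i
      induction i using Fin.lastCases with
      | last => rw [gl]; simp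
      | cast i => rw [gc]; exact g1 i)
    (by
      intro a b hab
      simp only [Function.onFun]
      induction a using Fin.lastCases with
      | last => rw [gl]; simp
      | cast a =>
        induction b using Fin.lastCases with
        | last => rw [gl]; simp
        | cast b =>
          rw [gc, gc]
          exact g2 (fun h => hab (by rw [h])))
  rw [gU] at hγc
  obtain ⟨F, G, hF, hG, hFe, hFp, hcard⟩ := kexchange (Fin.last k) p hp φ γ hφ hγ (hγe _ gl)
    (by rwa [hφc]) (by rwa [hγc])
  obtain ⟨a, a1, a2, a3, a4⟩ := kfamily_of_perm _ F rfl hF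
  obtain ⟨b, b1, b2, b3, -⟩ := kfamily_of_perm _ G rfl hG
  have al : a (Fin.last k) = ∅ := by
    rw [Finset.eq_empty_iff_forall_notMem]
    intro z hz
    obtain ⟨y, -, -, hy⟩ := a4 _ z hz
    have := F.injective (hy.trans hFe.symm)
    simp at this
  have aU : univ.biUnion (fun i : Fin k => a i.castSucc) = univ.biUnion a := by
    ext x
    simp only [Finset.mem_biUnion, Finset.mem_univ, true_and]
    constructor
    · rintro ⟨i, hi⟩; exact ⟨_, hi⟩
    · rintro ⟨i, hi⟩
      induction i using Fin.lastCases with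
      | last => rw [al] at hi; simp at hi
      | cast i => exact ⟨i, hi⟩
  have c1 : ∀ i : Fin k, IsChain (· ≤ ·) (↑(a i.castSucc) : Set α) := fun i => a1 _
  have c2 : Pairwise (Function.onFun Disjoint (fun i : Fin k => a i.castSucc)) :=
    fun i j hij => a2 (fun h => hij (Fin.castSucc_injective _ h))
  have e1 := kle_cMax _ c1 c2
  have e2 := kle_cMax b b1 b2
  rw [aU, a3] at e1
  rw [b3] at e2
  rw [hφc, hγc, h3, g3] at hcard
  have := hcov _ c1 c2 (by rw [aU, a3]; omega)
  rw [aU, a3] at this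
  exact hFp this

end Aux

theorem maximal_chain_families_keep_covering
    (α : Type*) [PartialOrder α] [Fintype α] [DecidableEq α]
    (p : α) (hp : ∀ x : α, p ≤ x → x = p) (k : ℕ)
    (hcov : ∀ f : Fin k → Finset α,
      (∀ i, IsChain (· ≤ ·) (↑(f i) : Set α)) →
      Pairwise (Function.onFun Disjoint f) →
      (Finset.univ.biUnion f).card = cMax α k →
      p ∈ Finset.univ.biUnion f) :
    ∀ k' : ℕ, k ≤ k' → ∀ f : Fin k' → Finset α,
      (∀ i, IsChain (· ≤ ·) (↑(f i) : Set α)) →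
      Pairwise (Function.onFun Disjoint f) →
      (Finset.univ.biUnion f).card = cMax α k' →
      p ∈ Finset.univ.biUnion f := by
  intro k' hk
  induction k', hk using Nat.le_induction with
  | base => exact hcov
  | succ n _ ih => exact kstep p hp n ih
end

section
/- If a chain family C = {C_1,...,C_l} and an antichain family A = {A_1,...,A_k} in a finite poset P are orthogonal, then C is a maximal chain l-family (it covers c_l(P) elements) and A is a maximal antichain k-family (it covers a_k(P) elements). -/
open Finset

theorem orth_aux_upper {α : Type*} [PartialOrder α] [Fintype α] [DecidableEq α]
    {l k : ℕ} (C : Fin l → Finset α) (A : Fin k → Finset α)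
    (hC : ∀ i, IsChain (· ≤ ·) (↑(C i) : Set α))
    (hA : ∀ j, IsAntichain (· ≤ ·) (↑(A j) : Set α)) :
    (Finset.univ.biUnion C).card + (Finset.univ.biUnion A).card ≤ Fintype.card α + l * k := by
  have h1 : (Finset.univ.biUnion C ∩ Finset.univ.biUnion A).card ≤ l * k := by
    have hsub : Finset.univ.biUnion C ∩ Finset.univ.biUnion A ⊆
        (Finset.univ : Finset (Fin l × Fin k)).biUnion (fun p => C p.1 ∩ A p.2) := by
      intro x hx
      simp only [Finset.mem_inter, Finset.mem_biUnion, Finset.mem_univ, true_and] at hx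
      obtain ⟨⟨i, hi⟩, ⟨j, hj⟩⟩ := hx
      simp only [Finset.mem_inter, Finset.mem_biUnion, Finset.mem_univ, true_and]
      exact ⟨(i, j), hi, hj⟩
    refine (Finset.card_le_card hsub).trans ?_
    refine (Finset.card_biUnion_le_card_mul _ _ 1 ?_).trans (by simp)
    rintro ⟨i, j⟩ -
    rw [Finset.card_le_one]
    intro a ha b hb
    simp only [Finset.mem_inter] at ha hb
    by_contra hab
    rcases hC i (Finset.mem_coe.2 ha.1) (Finset.mem_coe.2 hb.1) hab with h | h
    · exact hA j (Finset.mem_coe.2 ha.2) (Finset.mem_coe.2 hb.2) hab h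
    · exact hA j (Finset.mem_coe.2 hb.2) (Finset.mem_coe.2 ha.2) (Ne.symm hab) h
  have h2 := Finset.card_union_add_card_inter (Finset.univ.biUnion C) (Finset.univ.biUnion A)
  have h3 := Finset.card_le_univ (Finset.univ.biUnion C ∪ Finset.univ.biUnion A)
  omega

theorem orthogonal_families_are_maximal
    (α : Type*) [PartialOrder α] [Fintype α] [DecidableEq α]
    (l k : ℕ) (C : Fin l → Finset α) (A : Fin k → Finset α)
    (hC : ∀ i, IsChain (· ≤ ·) (↑(C i) : Set α))
    (hCd : Pairwise (Function.onFun Disjoint C))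
    (hA : ∀ j, IsAntichain (· ≤ ·) (↑(A j) : Set α))
    (hAd : Pairwise (Function.onFun Disjoint A))
    (hcover : Finset.univ.biUnion C ∪ Finset.univ.biUnion A = Finset.univ)
    (hmeet : ∀ i j, (C i ∩ A j).Nonempty) :
    (Finset.univ.biUnion C).card = cMax α l ∧
    (Finset.univ.biUnion A).card = aMax α k := by
  have hlow : l * k ≤ (Finset.univ.biUnion C ∩ Finset.univ.biUnion A).card := by
    choose x hx using hmeet
    simp only [Finset.mem_inter] at hx
    have hinj : Function.Injective (fun p : Fin l × Fin k => x p.1 p.2) := by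
      rintro ⟨i, j⟩ ⟨i', j'⟩ h
      simp only at h
      have e1 : i = i' := by
        by_contra hne
        exact Finset.disjoint_left.1 (hCd hne) (hx i j).1 (h ▸ (hx i' j').1)
      have e2 : j = j' := by
        by_contra hne
        exact Finset.disjoint_left.1 (hAd hne) (hx i j).2 (h ▸ (hx i' j').2)
      rw [e1, e2]
    have := Finset.card_le_card_of_injOn (s := (Finset.univ : Finset (Fin l × Fin k)))
      (t := Finset.univ.biUnion C ∩ Finset.univ.biUnion A) (fun p => x p.1 p.2)
      (fun p _ => by
        simp only [Finset.coe_inter, Set.mem_inter_iff, Finset.mem_coe, Finset.mem_inter,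
          Finset.mem_biUnion, Finset.mem_univ, true_and]
        exact ⟨⟨_, (hx p.1 p.2).1⟩, ⟨_, (hx p.1 p.2).2⟩⟩) hinj.injOn
    simpa using this
  have h2 := Finset.card_union_add_card_inter (Finset.univ.biUnion C) (Finset.univ.biUnion A)
  rw [hcover, Finset.card_univ] at h2
  constructor
  · symm
    apply IsGreatest.csSup_eq
    refine ⟨⟨C, hC, hCd, rfl⟩, ?_⟩
    rintro n ⟨f, hf, -, rfl⟩
    have := orth_aux_upper f A hf hA
    omega
  · symm
    apply IsGreatest.csSup_eq
    refine ⟨⟨A, hA, hAd, rfl⟩, ?_⟩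
    rintro n ⟨f, hf, -, rfl⟩
    have := orth_aux_upper C f hC hf
    omega
end

section
/- (Recursive shape computation, distinct case) Let p_1,...,p_k be all the maximal elements of a finite poset P, and suppose the shapes λ(P - {p_i}) are not all equal. Then λ(P) = ∪_i λ(P - {p_i}), i.e., λ_j(P) = max_i λ_j(P - {p_i}) for every row index j. -/
open Finset

namespace RS

def Good {α : Type*} [PartialOrder α] {k : ℕ} (σ : Equiv.Perm (α ⊕ Fin k)) : Prop :=
  ∀ x y : α, σ (Sum.inl x) = Sum.inl y → x ≤ y

theorem famA {α : Type*} [PartialOrder α] [Fintype α] [DecidableEq α] {k : ℕ}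
    (f : Fin k → Finset α) (hf : ∀ i, IsChain (· ≤ ·) (↑(f i) : Set α)) (U : Finset α) :
    (∀ x ∈ U, ∃ i, x ∈ f i) → 
    ∃ σ : Equiv.Perm (α ⊕ Fin k), Good σ ∧ (∀ x, σ (Sum.inl x) ≠ Sum.inl x ↔ x ∈ U) ∧
      (∀ y i, σ (Sum.inl y) = Sum.inr i → y ∈ f i) ∧
      (∀ i i', σ (Sum.inr i) = Sum.inr i' → i = i') := by
  induction U using Finset.strongInduction with
  | H U ih =>
    intro hU
    rcases U.eq_empty_or_nonempty with rfl | hne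
    · exact ⟨1, by intro x y h; simp at h; exact h.le, by simp, by simp, by simp⟩
    · obtain ⟨x, hx⟩ := Finset.exists_maximal hne
      have hxU : x ∈ U := hx.1
      obtain ⟨i, hi⟩ := hU x hxU
      obtain ⟨σ, h1, h2, h3, h4⟩ := ih (U.erase x) (Finset.erase_ssubset hxU)
        (fun y hy => hU y (Finset.mem_of_mem_erase hy))
      have hfix : σ (Sum.inl x) = Sum.inl x := by
        by_contra h
        have := (h2 x).1 h
        simp at this
      have hinj : ∀ z, σ z = Sum.inl x → z = Sum.inl x := fun z hz =>
        σ.injective (hz.trans hfix.symm)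
      have key : ∀ z w, (Equiv.swap (Sum.inl x) (Sum.inr i) * σ) z = w →
          (z = Sum.inl x ∧ w = Sum.inr i) ∨ (z ≠ Sum.inl x ∧ σ z = Sum.inr i ∧ w = Sum.inl x) ∨
          (z ≠ Sum.inl x ∧ σ z = w ∧ w ≠ Sum.inl x ∧ w ≠ Sum.inr i) := by
        intro z w hw
        rw [Equiv.Perm.mul_apply] at hw
        by_cases hz : z = Sum.inl x
        · left
          subst hz
          rw [hfix, Equiv.swap_apply_left] at hw
          exact ⟨rfl, hw.symm⟩
        · right
          by_cases hz2 : σ z = Sum.inr i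
          · left
            rw [hz2, Equiv.swap_apply_right] at hw
            exact ⟨hz, hz2, hw.symm⟩
          · right
            have : σ z ≠ Sum.inl x := fun h => hz (hinj z h)
            rw [Equiv.swap_apply_of_ne_of_ne this hz2] at hw
            subst hw
            exact ⟨hz, rfl, this, hz2⟩
      refine ⟨Equiv.swap (Sum.inl x) (Sum.inr i) * σ, ?_, ?_, ?_, ?_⟩
      · intro y z h
        rcases key _ _ h with ⟨_, h'⟩ | ⟨hy, hs, h'⟩ | ⟨hy, hs, _⟩
        · simp at h'
        · have hz : z = x := by simpa using h'
          subst hz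
          have hyf := h3 _ _ hs
          have hyU := (h2 y).1 (by rw [hs]; simp)
          rcases (hf i).total (Finset.mem_coe.2 hyf) (Finset.mem_coe.2 hi) with h | h
          · exact h
          · exact hx.2 (Finset.mem_of_mem_erase hyU) h
        · exact h1 _ _ hs
      · intro y
        constructor
        · intro h
          rcases key (Sum.inl y) _ rfl with ⟨hy, _⟩ | ⟨hy, hs, h'⟩ | ⟨hy, hs, _⟩
          · have : y = x := by simpa using hy
            exact this ▸ hxU
          · exact Finset.mem_of_mem_erase ((h2 y).1 (by rw [hs]; simp))
          · exact Finset.mem_of_mem_erase ((h2 y).1 (by rw [hs]; exact h))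
        · intro hy h
          rcases key _ _ h with ⟨_, h'⟩ | ⟨hy, hs, h'⟩ | ⟨hy', hs, _⟩
          · simp at h'
          · exact hy h'
          · refine (h2 y).2 (Finset.mem_erase.2 ⟨?_, hy⟩) hs
            rintro rfl
            exact hy' rfl
      · intro y i' h
        rcases key _ _ h with ⟨hy, h'⟩ | ⟨hy, hs, h'⟩ | ⟨hy', hs, _⟩
        · have e1 : y = x := by simpa using hy
          have e2 : i' = i := by simpa using h'
          subst e1 e2
          exact hi
        · simp at h'
        · exact h3 _ _ hs
      · intro i1 i2 h
        rcases key _ _ h with ⟨hy, h'⟩ | ⟨hy, hs, h'⟩ | ⟨hy', hs, _⟩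
        · simp at hy
        · simp at h'
        · exact h4 _ _ hs

theorem famB {α : Type*} [PartialOrder α] [Fintype α] [DecidableEq α] {k : ℕ}
    (σ : Equiv.Perm (α ⊕ Fin k)) (hσ : Good σ) :
    ∃ f : Fin k → Finset α, (∀ i, IsChain (· ≤ ·) (↑(f i) : Set α)) ∧
      Pairwise (Function.onFun Disjoint f) ∧
      (∀ x, σ (Sum.inl x) ≠ Sum.inl x → ∃ i, x ∈ f i) ∧
      (∀ i, σ (Sum.inr i) = Sum.inr i → f i = ∅) := by
  classical
  let r : α → α → Prop := fun x y => σ (Sum.inl x) = Sum.inl y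
  have hru : Relator.RightUnique r := by
    intro a b c h1 h2
    exact Sum.inl_injective (h1.symm.trans h2)
  have hlu : Relator.RightUnique (Function.swap r) := by
    intro a b c h1 h2
    exact Sum.inl_injective (σ.injective (Eq.trans h1 (Eq.symm h2)))
  have hle : ∀ x y, Relation.ReflTransGen r x y → x ≤ y := by
    intro x y h
    induction h with
    | refl => exact le_rfl
    | tail _ h ih => exact ih.trans (hσ _ _ h)
  have hend : ∀ i x y, σ (Sum.inr i) = Sum.inl y → Relation.ReflTransGen r x y → x = y := by
    intro i x y h h'
    rcases Relation.ReflTransGen.cases_tail h' with h' | ⟨c, _, h'⟩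
    · exact h'.symm
    · exact absurd (σ.injective (h.trans (Eq.symm h'))) (by simp)
  refine ⟨fun i => Finset.univ.filter
    (fun x => ∃ y, σ (Sum.inr i) = Sum.inl y ∧ Relation.ReflTransGen r y x), ?_, ?_, ?_, ?_⟩
  · intro i x hx y hy _
    simp only [Finset.coe_filter, Finset.mem_univ, true_and, Set.mem_ofPred_eq] at hx hy
    obtain ⟨u, hu, hx⟩ := hx
    obtain ⟨v, hv, hy⟩ := hy
    have : u = v := Sum.inl_injective (hu.symm.trans hv)
    subst this
    rcases Relation.ReflTransGen.total_of_right_unique hru hx hy with h | h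
    · exact Or.inl (hle _ _ h)
    · exact Or.inr (hle _ _ h)
  · intro i j hij
    rw [Function.onFun, Finset.disjoint_left]
    intro x hx hy
    simp only [Finset.mem_filter, Finset.mem_univ, true_and] at hx hy
    obtain ⟨u, hu, hx⟩ := hx
    obtain ⟨v, hv, hy⟩ := hy
    have huv : u = v := by
      rcases Relation.ReflTransGen.total_of_right_unique hlu
        (Relation.reflTransGen_swap.2 hx) (Relation.reflTransGen_swap.2 hy) with h | h
      · exact (hend _ _ _ hu (Relation.reflTransGen_swap.1 h)).symm
      · exact (hend _ _ _ hv (Relation.reflTransGen_swap.1 h))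
    subst huv
    exact hij (Sum.inr_injective (σ.injective (hu.trans hv.symm)))
  · intro x
    induction x using WellFoundedLT.induction with
    | ind x ih =>
      intro hx
      simp only [Finset.mem_filter, Finset.mem_univ, true_and] at ih ⊢
      obtain ⟨z, hz⟩ := σ.surjective (Sum.inl x)
      rcases z with z | i
      · have hzx : z ≠ x := by
          rintro rfl
          exact hx hz
        obtain ⟨i, y, h1, h2⟩ := ih z (lt_of_le_of_ne (hσ _ _ hz) hzx) (by
          rw [hz]; intro h; exact hzx (Sum.inl_injective h).symm)
        exact ⟨i, y, h1, h2.tail hz⟩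
      · exact ⟨i, x, hz, .refl⟩
  · intro i hi
    simp [hi]

theorem bdd (α : Type*) [PartialOrder α] [Fintype α] [DecidableEq α] (k : ℕ) :
    BddAbove {n : ℕ | ∃ f : Fin k → Finset α,
    (∀ i, IsChain (· ≤ ·) (↑(f i) : Set α)) ∧
    Pairwise (Function.onFun Disjoint f) ∧
    n = (Finset.univ.biUnion f).card} := by
  refine ⟨Fintype.card α, ?_⟩
  rintro n ⟨f, _, _, rfl⟩
  exact Finset.card_le_univ _

theorem cMax_attained (α : Type*) [PartialOrder α] [Fintype α] [DecidableEq α] (k : ℕ) :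
    ∃ f : Fin k → Finset α, (∀ i, IsChain (· ≤ ·) (↑(f i) : Set α)) ∧
      cMax α k = (Finset.univ.biUnion f).card := by
  obtain ⟨f, h1, _, h2⟩ := Nat.sSup_mem (s := {n : ℕ | ∃ f : Fin k → Finset α,
    (∀ i, IsChain (· ≤ ·) (↑(f i) : Set α)) ∧
    Pairwise (Function.onFun Disjoint f) ∧
    n = (Finset.univ.biUnion f).card})
    ⟨_, fun _ => ∅, by simp, fun i j _ => Finset.disjoint_empty_left _, rfl⟩ (bdd α k)
  exact ⟨f, h1, h2⟩

/-- Any family of chains gives a lower bound. -/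
theorem le_cMax {α : Type*} [PartialOrder α] [Fintype α] [DecidableEq α] {k : ℕ}
    (f : Fin k → Finset α) (hf : ∀ i, IsChain (· ≤ ·) (↑(f i) : Set α)) (U : Finset α)
    (hU : ∀ x ∈ U, ∃ i, x ∈ f i) : U.card ≤ cMax α k := by
  obtain ⟨σ, h1, h2, -, -⟩ := famA f hf U hU
  obtain ⟨g, g1, g2, g3, -⟩ := famB σ h1
  refine le_trans (Finset.card_le_card (t := Finset.univ.biUnion g) ?_)
    (le_csSup (bdd α k) ⟨g, g1, g2, rfl⟩)
  intro x hx
  simpa using g3 x ((h2 x).2 hx)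

theorem le_cMax_sub {α : Type*} [PartialOrder α] [Fintype α] [DecidableEq α] {k : ℕ} (p : α)
    (f : Fin k → Finset α) (hf : ∀ i, IsChain (· ≤ ·) (↑(f i) : Set α)) (U : Finset α)
    (hp : p ∉ U)
    (hU : ∀ x ∈ U, ∃ i, x ∈ f i) : U.card ≤ cMax {x : α // x ≠ p} k := by
  have := le_cMax (α := {x : α // x ≠ p}) (fun i => (f i).subtype (· ≠ p))
    (by
      intro i x hx y hy hxy
      simp only [Finset.mem_coe, Finset.mem_subtype] at hx hy
      exact hf i hx hy (fun h => hxy (Subtype.ext h))) (U.subtype (· ≠ p))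
    (by
      intro x hx
      simpa using hU x (by simpa using hx))
  rw [Finset.card_subtype, Finset.filter_true_of_mem] at this
  · exact this
  · rintro x hx rfl
    exact hp hx

theorem sub_attained {α : Type*} [PartialOrder α] [Fintype α] [DecidableEq α] (p : α) (k : ℕ) :
    ∃ (f : Fin k → Finset α) (U : Finset α), (∀ i, IsChain (· ≤ ·) (↑(f i) : Set α)) ∧
      p ∉ U ∧ (∀ x ∈ U, ∃ i, x ∈ f i) ∧ cMax {x : α // x ≠ p} k = U.card := by
  obtain ⟨f, h1, h2⟩ := cMax_attained {x : α // x ≠ p} k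
  refine ⟨fun i => (f i).map (Function.Embedding.subtype _),
    (Finset.univ.biUnion f).map (Function.Embedding.subtype _), ?_, ?_, ?_, ?_⟩
  · intro i x hx y hy hxy
    simp only [Finset.coe_map, Set.mem_image, Finset.mem_coe] at hx hy
    obtain ⟨x, hx, rfl⟩ := hx
    obtain ⟨y, hy, rfl⟩ := hy
    exact h1 i hx hy (fun h => hxy (by rw [h]))
  · simp
  · intro x hx
    simp only [Finset.mem_map, Finset.mem_biUnion, Finset.mem_univ, true_and] at hx ⊢
    obtain ⟨a, ⟨i, hi⟩, rfl⟩ := hx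
    exact ⟨i, a, hi, rfl⟩
  · rw [Finset.card_map, h2]

theorem cMax_mono (α : Type*) [PartialOrder α] [Fintype α] [DecidableEq α] (k : ℕ) :
    cMax α k ≤ cMax α (k+1) := by
  obtain ⟨f, h1, h2⟩ := cMax_attained α k
  rw [h2]
  refine le_cMax (Fin.snoc (α := fun _ => Finset α) f ∅) ?_ _ ?_
  · intro i
    refine Fin.lastCases ?_ (fun i => ?_) i
    · simp
    · simpa using h1 i
  · intro x hx
    simp only [Finset.mem_biUnion, Finset.mem_univ, true_and] at hx
    obtain ⟨i, hi⟩ := hx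
    exact ⟨i.castSucc, by simpa using hi⟩

theorem sub_le {α : Type*} [PartialOrder α] [Fintype α] [DecidableEq α] (p : α) (k : ℕ) :
    cMax {x : α // x ≠ p} k ≤ cMax α k := by
  obtain ⟨f, U, h1, _, h2, h3⟩ := sub_attained p k
  rw [h3]
  exact le_cMax f h1 U h2

theorem le_sub {α : Type*} [PartialOrder α] [Fintype α] [DecidableEq α] (p : α) (k : ℕ) :
    cMax α k ≤ cMax {x : α // x ≠ p} k + 1 := by
  obtain ⟨f, h1, h2⟩ := cMax_attained α k
  have := le_cMax_sub p f h1 ((Finset.univ.biUnion f).erase p) (by simp) (by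
    intro x hx
    simpa using Finset.mem_of_mem_erase hx)
  have := Finset.pred_card_le_card_erase (s := Finset.univ.biUnion f) (a := p)
  omega

theorem cMax_zero (α : Type*) [PartialOrder α] [Fintype α] [DecidableEq α] : cMax α 0 = 0 := by
  obtain ⟨f, h1, h2⟩ := cMax_attained α 0
  simpa using h2

theorem split {X : Type*} [Fintype X] [DecidableEq X] (τ : Equiv.Perm X) (a p : X) (h : a ≠ p) :
    (∃ S : Set X, p ∈ S ∧ a ∉ S ∧ ∀ x, τ x ∈ S ↔ x ∈ S) ∨
    (∃ S : Set X, p ∈ S ∧ a ∉ S ∧ ∀ x, (Equiv.swap a p * τ) x ∈ S ↔ x ∈ S) := by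
  classical
  by_cases hc : τ.SameCycle p a
  · right
    have hex : ∃ n : ℕ, (τ ^ n) p = a := hc.exists_nat_pow_eq
    let m := Nat.find hex
    have hm : (τ ^ m) p = a := Nat.find_spec hex
    have hmin : ∀ n < m, (τ ^ n) p ≠ a := fun n hn => Nat.find_min hex hn
    have hm0 : 0 < m := by
      rcases Nat.eq_zero_or_pos m with h0 | h0
      · rw [h0] at hm; exact absurd hm.symm (by simpa using h)
      · exact h0
    let S : Set X := {x | ∃ i < m, (τ ^ i) p = x}
    have hmaps : ∀ x, x ∈ S → (Equiv.swap a p * τ) x ∈ S := by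
      rintro x ⟨i, hi, rfl⟩
      have e0 : (Equiv.swap a p * τ) ((τ ^ i) p) = Equiv.swap a p ((τ ^ (i+1)) p) := by
        rw [pow_succ']; rfl
      rw [e0]
      rcases Nat.lt_or_ge (i+1) m with h' | h'
      · have e1 := hmin _ h'
        have e2 : (τ ^ (i+1)) p ≠ p := by
          intro e
          refine hmin (m - (i+1)) (by omega) ?_
          rw [← hm]
          conv_rhs => rw [show m = (m - (i+1)) + (i+1) by omega, pow_add, Equiv.Perm.mul_apply, e]
        rw [Equiv.swap_apply_of_ne_of_ne e1 e2]
        exact ⟨i+1, h', rfl⟩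
      · have : i + 1 = m := by omega
        rw [this, hm, Equiv.swap_apply_left]
        exact ⟨0, hm0, rfl⟩
    refine ⟨S, ⟨0, hm0, rfl⟩, ?_, ?_⟩
    · rintro ⟨i, hi, e⟩
      exact hmin i hi e
    · intro x
      refine ⟨fun hx => ?_, hmaps x⟩
      have := Equiv.Perm.perm_symm_on_of_perm_on_finite (p := fun x => x ∈ S) hmaps hx
      rwa [Equiv.symm_apply_apply] at this
  · left
    exact ⟨{x | τ.SameCycle p x}, Equiv.Perm.SameCycle.refl _ _, hc,
      fun x => Equiv.Perm.sameCycle_apply_right⟩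

theorem exch {X : Type*} [Fintype X] [DecidableEq X] (F G : Equiv.Perm X) (S : Set X)
    (hS : ∀ x, (F⁻¹ * G) x ∈ S ↔ x ∈ S) :
    ∃ F' G' : Equiv.Perm X, (∀ x ∈ S, F' x = G x ∧ G' x = F x) ∧
      (∀ x ∉ S, F' x = F x ∧ G' x = G x) := by
  classical
  have h1 : Function.Injective (fun x => if x ∈ S then G x else F x) := by
    intro x y h
    simp only at h
    split_ifs at h with hx hy hy
    · exact G.injective h
    · exfalso
      have := (hS x).2 hx
      rw [Equiv.Perm.mul_apply, h] at this
      exact hy (by simpa using this)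
    · exfalso
      have := (hS y).2 hy
      rw [Equiv.Perm.mul_apply, ← h] at this
      exact hx (by simpa using this)
    · exact F.injective h
  have hS' : ∀ x y, F x = G y → (x ∈ S ↔ y ∈ S) := by
    intro x y h
    rw [← hS y, Equiv.Perm.mul_apply, ← h]
    simp
  have h2 : Function.Injective (fun x => if x ∈ S then F x else G x) := by
    intro x y h
    simp only at h
    split_ifs at h with hx hy hy
    · exact F.injective h
    · exact absurd ((hS' _ _ h).1 hx) hy
    · exact absurd ((hS' _ _ h.symm).1 hy) hx
    · exact G.injective h
  refine ⟨Equiv.ofBijective _ (Finite.injective_iff_bijective.1 h1),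
    Equiv.ofBijective _ (Finite.injective_iff_bijective.1 h2), ?_, ?_⟩
  · intro x hx; simp [hx]
  · intro x hx; simp [hx]

theorem main_ineq {α : Type*} [PartialOrder α] [Fintype α] [DecidableEq α] (p : α)
    (hp : ∀ y, p ≤ y → y = p) (k : ℕ) :
    cMax α k + cMax {x : α // x ≠ p} (k+1) ≤ cMax {x : α // x ≠ p} k + cMax α (k+1) := by
  classical
  obtain ⟨f, f1, f2⟩ := cMax_attained α k
  obtain ⟨g, V, g1, g2, g3, g4⟩ := sub_attained p (k+1)
  by_cases hpU : p ∈ Finset.univ.biUnion f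
  swap
  · have := le_cMax_sub p f f1 _ hpU (by intro x hx; simpa using hx)
    have := sub_le p (k+1)
    omega
  obtain ⟨F, F1, F2, F3, F4⟩ := famA (Fin.snoc (α := fun _ => Finset α) f ∅) (by
    intro i
    refine Fin.lastCases ?_ (fun i => ?_) i
    · simp
    · simpa using f1 i) (Finset.univ.biUnion f) (by
    intro x hx
    simp only [Finset.mem_biUnion, Finset.mem_univ, true_and] at hx
    obtain ⟨i, hi⟩ := hx
    exact ⟨i.castSucc, by simpa using hi⟩)
  obtain ⟨G, G1, G2, -, -⟩ := famA g g1 V g3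
  have hFl : F (Sum.inr (Fin.last k)) = Sum.inr (Fin.last k) := by
    obtain ⟨z, hz⟩ := F.surjective (Sum.inr (Fin.last k))
    rcases z with z | i
    · have := F3 _ _ hz
      simp at this
    · have := F4 _ _ hz
      rw [this] at hz; exact hz
  -- combine
  have comb : ∀ (G : Equiv.Perm (α ⊕ Fin (k+1))), Good G →
      (∀ x, G (Sum.inl x) ≠ Sum.inl x ↔ x ∈ V) → ∀ S : Set (α ⊕ Fin (k+1)),
      Sum.inl p ∈ S → Sum.inr (Fin.last k) ∉ S → (∀ x, (F⁻¹ * G) x ∈ S ↔ x ∈ S) →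
      cMax α k + cMax {x : α // x ≠ p} (k+1) ≤ cMax {x : α // x ≠ p} k + cMax α (k+1) := by
    intro G G1 G2 S hpS hlS hS
    obtain ⟨F', G', h1, h2⟩ := exch F G S hS
    have gF : Good F' := by
      intro x y h
      by_cases hx : Sum.inl x ∈ S
      · rw [(h1 _ hx).1] at h; exact G1 _ _ h
      · rw [(h2 _ hx).1] at h; exact F1 _ _ h
    have gG : Good G' := by
      intro x y h
      by_cases hx : Sum.inl x ∈ S
      · rw [(h1 _ hx).2] at h; exact F1 _ _ h
      · rw [(h2 _ hx).2] at h; exact G1 _ _ h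
    obtain ⟨a, a1, -, a3, a4⟩ := famB F' gF
    obtain ⟨b, b1, -, b3, -⟩ := famB G' gG
    have ha0 := a4 (Fin.last k) (by rw [(h2 _ hlS).1, hFl])
    have e1 := le_cMax_sub p (fun i => a i.castSucc) (fun i => a1 _)
      (Finset.univ.filter (fun x => F' (Sum.inl x) ≠ Sum.inl x)) (by
        have : G (Sum.inl p) = Sum.inl p := by
          by_contra h
          exact g2 ((G2 p).1 h)
        simp [(h1 _ hpS).1, this]) (by
        intro x hx
        obtain ⟨i, hi⟩ := a3 x (by simpa using hx)
        revert hi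
        refine Fin.lastCases ?_ (fun i => ?_) i
        · rw [ha0]; simp
        · exact fun hi => ⟨i, hi⟩)
    have e2 := le_cMax b b1 (Finset.univ.filter (fun x => G' (Sum.inl x) ≠ Sum.inl x)) (by
        intro x hx
        exact b3 x (by simpa using hx))
    have e3 : (Finset.univ.biUnion f).card =
        (Finset.univ.filter (fun x => F (Sum.inl x) ≠ Sum.inl x)).card := by
      congr 1; ext x; rw [Finset.mem_filter, F2 x]; simp
    have e4 : V.card =
        (Finset.univ.filter (fun x => G (Sum.inl x) ≠ Sum.inl x)).card := by
      congr 1; ext x; rw [Finset.mem_filter, G2 x]; simp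
    refine le_trans (le_of_eq ?_) (add_le_add e1 e2)
    rw [f2, g4, e3, e4]
    simp only [Finset.card_filter, ← Finset.sum_add_distrib]
    refine Finset.sum_congr rfl (fun x _ => ?_)
    by_cases hx : Sum.inl x ∈ S
    · rw [(h1 _ hx).1, (h1 _ hx).2, add_comm]
    · rw [(h2 _ hx).1, (h2 _ hx).2]
  have hFp : ∃ b, F (Sum.inl p) = Sum.inr b := by
    rcases hz : F (Sum.inl p) with z | b
    · have := hp z (F1 _ _ hz)
      subst this
      exact absurd hz ((F2 z).2 hpU)
    · exact ⟨b, rfl⟩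
  obtain ⟨b, hb⟩ := hFp
  rcases split (F⁻¹ * G) (Sum.inr (Fin.last k)) (Sum.inl p) (by simp) with
    ⟨S, s1, s2, s3⟩ | ⟨S, s1, s2, s3⟩
  · exact comb G G1 G2 S s1 s2 s3
  · have hsw : ∀ x y : α, (Equiv.swap (Sum.inr (Fin.last k)) (Sum.inr b) * G :
        Equiv.Perm (α ⊕ Fin (k+1))) (Sum.inl x)
        = Sum.inl y ↔ G (Sum.inl x) = Sum.inl y := by
      intro x y
      rw [Equiv.Perm.mul_apply, Equiv.swap_apply_eq_iff, Equiv.swap_apply_of_ne_of_ne] <;> simp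
    have heq : F⁻¹ * (Equiv.swap (Sum.inr (Fin.last k)) (Sum.inr b) * G) =
        Equiv.swap (Sum.inr (Fin.last k)) (Sum.inl p) * (F⁻¹ * G) := by
      have : Equiv.swap (Sum.inr (Fin.last k)) (Sum.inr b) =
          F * Equiv.swap (Sum.inr (Fin.last k)) (Sum.inl p) * F⁻¹ := by
        rw [← Equiv.swap_apply_apply, hFl, hb]
      rw [this]; group
    refine comb _ ?_ ?_ S s1 s2 (by rw [heq]; exact s3)
    · intro x y h
      exact G1 _ _ ((hsw _ _).1 h)
    · intro x
      rw [← G2 x, not_iff_not]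
      exact hsw x x

theorem sub_mono {α : Type*} [PartialOrder α] [Fintype α] [DecidableEq α] (p : α)
    (hp : ∀ y, p ≤ y → y = p) (k l : ℕ) (hkl : k ≤ l) :
    cMax α k + cMax {x : α // x ≠ p} l ≤ cMax {x : α // x ≠ p} k + cMax α l := by
  induction l, hkl using Nat.le_induction with
  | base => omega
  | succ l _ ih =>
    have := main_ineq p hp l
    omega

end RS

open RS in
theorem recursive_shape_distinct_case
    (α : Type*) [PartialOrder α] [Fintype α] [DecidableEq α]
    (ps : Finset α) (hps : ∀ x : α, x ∈ ps ↔ ∀ y : α, x ≤ y → y = x)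
    (hne : ∃ p ∈ ps, ∃ q ∈ ps, ∃ i : ℕ,
      lam {x : α // x ≠ p} i ≠ lam {x : α // x ≠ q} i) :
    ∀ j : ℕ, 1 ≤ j → lam α j = ps.sup (fun p => lam {x : α // x ≠ p} j) := by
  obtain ⟨p, hp, q, hq, i, hi⟩ := hne
  intro j hj
  obtain ⟨j, rfl⟩ : ∃ j', j = j' + 1 := ⟨j - 1, by omega⟩
  apply le_antisymm
  · by_contra hcon
    have hlt : ∀ r ∈ ps, lam {x : α // x ≠ r} (j+1) < lam α (j+1) := fun r hr =>
      lt_of_le_of_lt (Finset.le_sup (f := fun p => lam {x : α // x ≠ p} (j+1)) hr)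
        (not_le.1 hcon)
    have det : ∀ r ∈ ps, ∀ l, cMax α l = cMax {x : α // x ≠ r} l + (if l ≤ j then 0 else 1) := by
      intro r hr l
      have h0 := hlt r hr
      simp only [lam, Nat.add_sub_cancel] at h0
      have a1 := sub_le r j
      have a2 := le_sub r j
      have a3 := sub_le r (j+1)
      have a4 := le_sub r (j+1)
      have a5 := sub_le r l
      have a6 := le_sub r l
      have a7 := cMax_mono α j
      have a8 := cMax_mono {x : α // x ≠ r} j
      split_ifs with hl
      · have := sub_mono r ((hps r).1 hr) l j hl
        omega
      · have := sub_mono r ((hps r).1 hr) (j+1) l (by omega)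
        omega
    apply hi
    have b1 := det p hp i
    have b2 := det q hq i
    have b3 := det p hp (i-1)
    have b4 := det q hq (i-1)
    simp only [lam]
    omega
  · refine Finset.sup_le (fun r hr => ?_)
    have h1 := main_ineq r ((hps r).1 hr) j
    have h2 := cMax_mono α j
    have h3 := cMax_mono {x : α // x ≠ r} j
    simp only [lam, Nat.add_sub_cancel]
    omega
end

section
/- Let p_1, p_2 be two maximal elements of a finite poset P with λ(P - {p_1}) = λ(P - {p_2}) = λ(P) - {B}, and λ(P - {p_1, p_2}) = λ(P) - {A, B} for boxes A, B. Then the column index of A is at least the column index of B; i.e., with B removed from row y_B, column x_B = λ_{y_B}(P), and A from row y_A, column x_A of λ(P) - {B}, one has x_A ≥ x_B. -/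
open Finset

lemma bx_exchange {L R : Type*} (s : Set L) (f g : L → R) (hf : Set.InjOn f s) (hg : Set.InjOn g s)
    (r₁ r₂ : R) (hr : r₁ ≠ r₂) (h1 : ∀ x ∈ s, g x ≠ r₁) (h2 : ∀ x ∈ s, g x ≠ r₂) :
    ∃ f' g' : L → R, Set.InjOn f' s ∧ Set.InjOn g' s ∧
      (∀ x, (f' x = f x ∧ g' x = g x) ∨ (f' x = g x ∧ g' x = f x)) ∧
      (∀ x ∈ s, f' x ≠ r₁) ∧ (∀ x ∈ s, g' x ≠ r₂) := by
  classical
  by_cases hex : ∃ x₀ ∈ s, f x₀ = r₁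
  swap
  · push Not at hex
    exact ⟨f, g, hf, hg, fun x => Or.inl ⟨rfl, rfl⟩, hex, h2⟩
  obtain ⟨x₀, hx₀, hfx₀⟩ := hex
  let st : L → L → Prop := fun x y => x ∈ s ∧ y ∈ s ∧ f y = g x
  let S : Set L := {x | Relation.ReflTransGen st x₀ x}
  have hS1 : ∀ x ∈ s, x ∈ S → ∀ y ∈ s, f y = g x → y ∈ S := fun x hx hxS y hy h =>
    Relation.ReflTransGen.tail hxS ⟨hx, hy, h⟩
  have hS2 : ∀ y ∈ S, f y = r₁ ∨ ∃ z ∈ s, z ∈ S ∧ f y = g z := by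
    intro y hy
    rcases Relation.ReflTransGen.cases_tail hy with h | ⟨z, hz, hz2⟩
    · left; rw [← h] at hfx₀; exact hfx₀
    · exact Or.inr ⟨z, hz2.1, hz, hz2.2.2⟩
  refine ⟨fun x => if x ∈ S then g x else f x, fun x => if x ∈ S then f x else g x, ?_, ?_, ?_, ?_, ?_⟩
  · intro x hx y hy h
    by_cases hxS : x ∈ S <;> by_cases hyS : y ∈ S <;> simp only [hxS, hyS, if_true, if_false] at h
    · exact hg hx hy h
    · exact absurd (hS1 x hx hxS y hy h.symm) hyS
    · exact absurd (hS1 y hy hyS x hx h) hxS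
    · exact hf hx hy h
  · have key : ∀ x ∈ s, ∀ y ∈ s, x ∈ S → y ∉ S → f x ≠ g y := by
      intro x hx y hy hxS hyS h
      rcases hS2 x hxS with h' | ⟨z, hz, hzS, h'⟩
      · exact h1 y hy (h.symm.trans h')
      · exact hyS (hg hz hy (h'.symm.trans h) ▸ hzS)
    intro x hx y hy h
    by_cases hxS : x ∈ S <;> by_cases hyS : y ∈ S <;> simp only [hxS, hyS, if_true, if_false] at h
    · exact hf hx hy h
    · exact absurd h (key x hx y hy hxS hyS)
    · exact absurd h.symm (key y hy x hx hyS hxS)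
    · exact hg hx hy h
  · intro x
    by_cases hxS : x ∈ S <;> simp [hxS]
  · intro x hx
    by_cases hxS : x ∈ S <;> simp only [hxS, if_true, if_false]
    · exact h1 x hx
    · intro h
      apply hxS
      have : x = x₀ := hf hx hx₀ (h.trans hfx₀.symm)
      rw [this]
      exact Relation.ReflTransGen.refl
  · intro x hx
    by_cases hxS : x ∈ S <;> simp only [hxS, if_true, if_false]
    · rcases hS2 x hxS with h | ⟨z, hz, -, h⟩
      · rw [h]; exact hr
      · rw [h]; exact h2 z hz
    · exact h2 x hx

section bx
variable {α : Type*} [PartialOrder α] [Fintype α] [DecidableEq α]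
variable {β : Type*} [PartialOrder β] [Fintype β] [DecidableEq β]

lemma bx_bdd (k : ℕ) : BddAbove {n : ℕ | ∃ f : Fin k → Finset β,
    (∀ i, IsChain (· ≤ ·) (↑(f i) : Set β)) ∧
    Pairwise (Function.onFun Disjoint f) ∧
    n = (Finset.univ.biUnion f).card} := by
  refine ⟨Fintype.card β, ?_⟩
  rintro n ⟨f, -, -, rfl⟩
  exact Finset.card_le_univ _

lemma bx_le_cMax {k : ℕ} (f : Fin k → Finset β)
    (h : ∀ i, IsChain (· ≤ ·) (↑(f i) : Set β)) (h' : Pairwise (Function.onFun Disjoint f)) :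
    (Finset.univ.biUnion f).card ≤ cMax β k :=
  le_csSup (bx_bdd k) ⟨f, h, h', rfl⟩

lemma bx_cMax_spec (β : Type*) [PartialOrder β] [Fintype β] [DecidableEq β] (k : ℕ) :
    ∃ f : Fin k → Finset β,
    (∀ i, IsChain (· ≤ ·) (↑(f i) : Set β)) ∧
    Pairwise (Function.onFun Disjoint f) ∧
    cMax β k = (Finset.univ.biUnion f).card := by
  have := Nat.sSup_mem (s := {n : ℕ | ∃ f : Fin k → Finset β,
    (∀ i, IsChain (· ≤ ·) (↑(f i) : Set β)) ∧
    Pairwise (Function.onFun Disjoint f) ∧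
    n = (Finset.univ.biUnion f).card})
    ⟨0, fun _ => ∅, by simp, by intro i j _; exact Finset.disjoint_empty_left _, by symm; rw [Finset.card_eq_zero]; ext x; simp⟩ (bx_bdd k)
  exact this

lemma bx_cMax_zero (β : Type*) [PartialOrder β] [Fintype β] [DecidableEq β] : cMax β 0 = 0 := by
  obtain ⟨f, -, -, h⟩ := bx_cMax_spec β 0
  rw [h]; simp

lemma bx_cMax_mono (β : Type*) [PartialOrder β] [Fintype β] [DecidableEq β] (k : ℕ) :
    cMax β k ≤ cMax β (k+1) := by
  obtain ⟨f, h1, h2, h⟩ := bx_cMax_spec β k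
  rw [h]
  have : (Finset.univ.biUnion (Fin.cons ∅ f : Fin (k+1) → Finset β)) = Finset.univ.biUnion f := by
    ext x; simp [Fin.exists_fin_succ]
  rw [← this]
  apply bx_le_cMax
  · intro i
    refine Fin.cases ?_ (fun i => ?_) i
    · simp
    · simpa using h1 i
  · intro i j
    refine Fin.cases ?_ (fun i => ?_) i
    · simp [Function.onFun]
    · refine Fin.cases ?_ (fun j => ?_) j
      · simp [Function.onFun]
      · intro hij
        have : i ≠ j := fun h => hij (by rw [h])
        simpa [Function.onFun] using h2 this

/-- configurations -/
def BxCfg (q : α → Prop) (f : α → α ⊕ ℕ) : Prop :=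
  Function.Injective f ∧ (∀ x y, f x = Sum.inl y → x ≤ y) ∧ ∀ x, ¬ q x → f x = Sum.inl x

/-- used elements -/
def bxNl (f : α → α ⊕ ℕ) : ℕ := (Finset.univ.filter (fun x => f x ≠ Sum.inl x)).card
/-- ends -/
def bxRt (f : α → α ⊕ ℕ) : ℕ := (Finset.univ.filter (fun x => (f x).isRight = true)).card

lemma bx_fact2 (e : β ↪o α) (k : ℕ) : ∃ f : α → α ⊕ ℕ, BxCfg (fun x => x ∈ Set.range e) f ∧
    bxNl f = cMax β k ∧ ∀ x i, f x = Sum.inr i → i < k := by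
  classical
  obtain ⟨F, h1, h2, h⟩ := bx_cMax_spec β k
  let G : Fin k → Finset α := fun i => (F i).map e.toEmbedding
  have hGe : ∀ i x, x ∈ G i → x ∈ Set.range e := by
    intro i x hx
    simp only [G, Finset.mem_map] at hx
    obtain ⟨b, -, rfl⟩ := hx
    exact ⟨b, rfl⟩
  have hG1 : ∀ i, ∀ x ∈ G i, ∀ y ∈ G i, x ≤ y ∨ y ≤ x := by
    intro i x hx y hy
    simp only [G, Finset.mem_map] at hx hy
    obtain ⟨b, hb, rfl⟩ := hx
    obtain ⟨c, hc, rfl⟩ := hy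
    simpa using (h1 i).total hb hc
  have hG2 : ∀ i j x, x ∈ G i → x ∈ G j → i = j := by
    intro i j x hx hy
    simp only [G, Finset.mem_map] at hx hy
    obtain ⟨b, hb, rfl⟩ := hx
    obtain ⟨c, hc, hcb⟩ := hy
    have : c = b := e.injective hcb
    subst this
    by_contra hij
    exact Finset.disjoint_left.1 (h2 hij) hb hc
  have hG3 : ((Finset.univ : Finset (Fin k)).biUnion G).card = cMax β k := by
    rw [h]
    have : (Finset.univ : Finset (Fin k)).biUnion G = (Finset.univ.biUnion F).map e.toEmbedding := by
      ext x; simp [G]; aesop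
    rw [this, Finset.card_map]
  have hex : ∀ x : α, ∃ r : α ⊕ ℕ, ((∀ i, x ∉ G i) ∧ r = Sum.inl x) ∨
      ∃ i, x ∈ G i ∧ ((∃ y ∈ G i, x < y ∧ (∀ z ∈ G i, x < z → y ≤ z) ∧ r = Sum.inl y) ∨
        ((∀ z ∈ G i, ¬ x < z) ∧ r = Sum.inr i.1)) := by
    intro x
    by_cases hx : ∀ i, x ∉ G i
    · exact ⟨_, Or.inl ⟨hx, rfl⟩⟩
    push Not at hx
    obtain ⟨i, hi⟩ := hx
    by_cases hz : ∀ z ∈ G i, ¬ x < z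
    · exact ⟨_, Or.inr ⟨i, hi, Or.inr ⟨hz, rfl⟩⟩⟩
    push Not at hz
    obtain ⟨z, hz, hxz⟩ := hz
    obtain ⟨y, hy⟩ := Finset.exists_minimal (s := (G i).filter (fun z => x < z))
      ⟨z, by simp [hz, hxz]⟩
    have hym := Finset.mem_filter.1 hy.1
    refine ⟨Sum.inl y, Or.inr ⟨i, hi, Or.inl ⟨y, hym.1, hym.2, ?_, rfl⟩⟩⟩
    intro w hw hxw
    rcases hG1 i y hym.1 w hw with h | h
    · exact h
    · exact hy.2 (Finset.mem_filter.2 ⟨hw, hxw⟩) h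
  choose f hf using hex
  have hloop : ∀ x, f x ≠ Sum.inl x ↔ ∃ i, x ∈ G i := by
    intro x
    rcases hf x with ⟨hx, hr⟩ | ⟨i, hi, ⟨y, hy, hxy, -, hr⟩ | ⟨-, hr⟩⟩
    · simp [hr, hx]
    · rw [hr]; simp only [ne_eq, Sum.inl.injEq]
      exact ⟨fun _ => ⟨i, hi⟩, fun _ => hxy.ne'⟩
    · rw [hr]; simp only [ne_eq, reduceCtorEq, not_false_eq_true, true_iff]
      exact ⟨i, hi⟩
  refine ⟨f, ⟨?_, ?_, ?_⟩, ?_, ?_⟩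
  · intro x x' hxx
    rcases hf x with ⟨hx, hr⟩ | ⟨i, hi, ⟨y, hy, hxy, hmin, hr⟩ | ⟨hz, hr⟩⟩ <;>
    rcases hf x' with ⟨hx', hr'⟩ | ⟨i', hi', ⟨y', hy', hxy', hmin', hr'⟩ | ⟨hz', hr'⟩⟩ <;>
    rw [hr, hr'] at hxx
    · simpa using hxx
    · have := Sum.inl_injective hxx
      subst this
      exact absurd hy' (hx _)
    · simp at hxx
    · have := Sum.inl_injective hxx
      subst this
      exact absurd hy (hx' _)
    · have := Sum.inl_injective hxx
      subst this
      have := hG2 _ _ _ hy hy'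
      subst this
      by_contra hne
      rcases hG1 i x hi x' hi' with h | h
      · exact absurd (hmin x' hi' (lt_of_le_of_ne h hne)) hxy'.not_ge
      · exact absurd (hmin' x hi (lt_of_le_of_ne h (Ne.symm hne))) hxy.not_ge
    · simp at hxx
    · simp at hxx
    · simp at hxx
    · have := Fin.ext (Sum.inr_injective hxx)
      subst this
      by_contra hne
      rcases hG1 i x hi x' hi' with h | h
      · exact hz x' hi' (lt_of_le_of_ne h hne)
      · exact hz' x hi (lt_of_le_of_ne h (Ne.symm hne))
  · intro x y hxy
    rcases hf x with ⟨hx, hr⟩ | ⟨i, hi, ⟨y, hy, hxy', -, hr⟩ | ⟨-, hr⟩⟩ <;> rw [hr] at hxy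
    · exact (Sum.inl_injective hxy).le
    · rw [← Sum.inl_injective hxy]; exact hxy'.le
    · simp at hxy
  · intro x hx
    by_contra h
    obtain ⟨i, hi⟩ := (hloop x).1 h
    exact hx (hGe i x hi)
  · rw [← hG3, bxNl]
    congr 1
    ext x
    simp [hloop]
  · intro x j hj
    rcases hf x with ⟨hx, hr⟩ | ⟨i, hi, ⟨y, hy, hxy', -, hr⟩ | ⟨-, hr⟩⟩ <;> rw [hr] at hj
    · simp at hj
    · simp at hj
    · rw [← Sum.inr_injective hj]; exact i.2

lemma bx_fact1 (e : β ↪o α) (f : α → α ⊕ ℕ) (hf : BxCfg (fun x => x ∈ Set.range e) f) :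
    bxNl f ≤ cMax β (bxRt f) := by
  classical
  obtain ⟨hinj, hle, hq⟩ := hf
  let st : α → α → Prop := fun x y => f x = Sum.inl y ∧ x ≠ y
  have hstle : ∀ x y, Relation.ReflTransGen st x y → x ≤ y := by
    intro x y h
    induction h with
    | refl => exact le_rfl
    | tail _ h ih => exact ih.trans (hle _ _ h.1)
  have hru : Relator.RightUnique st := by
    intro a b c h1 h2
    exact Sum.inl_injective (h1.1.symm.trans h2.1)
  have hlu : Relator.RightUnique (Function.swap st) := by
    intro a b c h1 h2
    exact hinj (h1.1.trans h2.1.symm)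
  have hend : ∀ x, f x ≠ Sum.inl x → ∃ z, (f z).isRight = true ∧ Relation.ReflTransGen st x z := by
    intro x
    induction x using (wellFounded_gt (α := α)).induction with
    | _ x ih =>
    intro hx
    cases hfx : f x with
    | inr i => exact ⟨x, by simp [hfx], .refl⟩
    | inl y =>
      have hxy : x ≠ y := by rintro rfl; exact hx hfx
      have hlt : y > x := lt_of_le_of_ne (hle _ _ hfx) hxy
      obtain ⟨z, hz, hyz⟩ := ih y hlt (fun h => hxy (hinj (hfx.trans h.symm)))
      exact ⟨z, hz, Relation.ReflTransGen.head ⟨hfx, hxy⟩ hyz⟩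
  let E := Finset.univ.filter (fun x => (f x).isRight = true)
  let eq := E.equivFin
  let C : Fin E.card → Finset β := fun i =>
    Finset.univ.filter (fun b => Relation.ReflTransGen st (e b) (eq.symm i).1)
  have hC1 : ∀ i, IsChain (· ≤ ·) (↑(C i) : Set β) := by
    intro i b hb c hc _
    simp only [C, Finset.coe_filter, Finset.mem_univ, true_and, Set.mem_ofPred_eq] at hb hc
    rw [← Relation.reflTransGen_swap] at hb hc
    rcases Relation.ReflTransGen.total_of_right_unique hlu hb hc with h | h
    · right
      rw [Relation.reflTransGen_swap] at h
      exact e.le_iff_le.1 (hstle _ _ h)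
    · left
      rw [Relation.reflTransGen_swap] at h
      exact e.le_iff_le.1 (hstle _ _ h)
  have hnost : ∀ z w, (f z).isRight = true → Relation.ReflTransGen st z w → z = w := by
    intro z w hz h
    rcases Relation.ReflTransGen.cases_head h with h | ⟨c, hc, -⟩
    · exact h
    · rw [hc.1] at hz; simp at hz
  have hC2 : Pairwise (Function.onFun Disjoint C) := by
    intro i j hij
    refine Finset.disjoint_left.2 fun b hb hc => hij ?_
    simp only [C, Finset.mem_filter, Finset.mem_univ, true_and] at hb hc
    have hi : (f (eq.symm i).1).isRight = true := (Finset.mem_filter.1 (eq.symm i).2).2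
    have hj : (f (eq.symm j).1).isRight = true := (Finset.mem_filter.1 (eq.symm j).2).2
    apply eq.symm.injective
    apply Subtype.ext
    rcases Relation.ReflTransGen.total_of_right_unique hru hb hc with h | h
    · exact hnost _ _ hi h
    · exact (hnost _ _ hj h).symm
  refine le_trans ?_ (bx_le_cMax C hC1 hC2)
  rw [bxNl, ← Finset.card_map e.toEmbedding]
  apply Finset.card_le_card
  intro x hx
  simp only [Finset.mem_filter, Finset.mem_univ, true_and] at hx
  obtain ⟨z, hz, hxz⟩ := hend x hx
  have hxr : x ∈ Set.range e := by
    by_contra h; exact hx (hq x h)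
  obtain ⟨b, rfl⟩ := hxr
  have hzE : z ∈ E := by simp [E, hz]
  simp only [Finset.mem_map, Finset.mem_biUnion, Finset.mem_univ, true_and]
  refine ⟨b, ⟨eq ⟨z, hzE⟩, ?_⟩, rfl⟩
  simp [C, hxz]

lemma bx_rt_le (f : α → α ⊕ ℕ) (hf : Function.Injective f) (E : Finset ℕ)
    (h : ∀ x i, f x = Sum.inr i → i ∈ E) : bxRt f ≤ E.card := by
  classical
  rw [bxRt, ← Finset.card_image_of_injective _ hf,
    ← Finset.card_map (Function.Embedding.inr : ℕ ↪ α ⊕ ℕ)]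
  apply Finset.card_le_card
  intro r hr
  simp only [Finset.mem_image, Finset.mem_filter, Finset.mem_univ, true_and] at hr
  obtain ⟨x, hx, rfl⟩ := hr
  cases hfx : f x with
  | inl y => simp [hfx] at hx
  | inr i => simpa using h x i hfx

lemma bx_cMax_mono' (β : Type*) [PartialOrder β] [Fintype β] [DecidableEq β] :
    Monotone (cMax β) := monotone_nat_of_le_succ (bx_cMax_mono β)

lemma bx_nl_sum (f : α → α ⊕ ℕ) : bxNl f = ∑ x, if f x ≠ Sum.inl x then 1 else 0 := by
  rw [bxNl, Finset.card_filter]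

lemma bx_concave (β : Type*) [PartialOrder β] [Fintype β] [DecidableEq β] (k : ℕ) :
    cMax β (k+2) + cMax β k ≤ 2 * cMax β (k+1) := by
  classical
  let e : β ↪o β := (OrderIso.refl β).toOrderEmbedding
  obtain ⟨f, hf, hfn, hfk⟩ := bx_fact2 e (k+2)
  obtain ⟨g, hg, hgn, hgk⟩ := bx_fact2 e k
  obtain ⟨f', g', hf', hg', hsw, hf1, hg1⟩ := bx_exchange Set.univ f g hf.1.injOn hg.1.injOn
    (Sum.inr k) (Sum.inr (k+1)) (by simp)
    (fun x _ h => by have := hgk x _ h; omega) (fun x _ h => by have := hgk x _ h; omega)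
  have cf : BxCfg (fun x => x ∈ Set.range e) f' := by
    refine ⟨Set.injOn_univ.1 hf', fun x y h => ?_, fun x hx => absurd ⟨x, rfl⟩ hx⟩
    rcases hsw x with ⟨h1, -⟩ | ⟨h1, -⟩ <;> rw [h1] at h
    · exact hf.2.1 _ _ h
    · exact hg.2.1 _ _ h
  have cg : BxCfg (fun x => x ∈ Set.range e) g' := by
    refine ⟨Set.injOn_univ.1 hg', fun x y h => ?_, fun x hx => absurd ⟨x, rfl⟩ hx⟩
    rcases hsw x with ⟨-, h1⟩ | ⟨-, h1⟩ <;> rw [h1] at h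
    · exact hg.2.1 _ _ h
    · exact hf.2.1 _ _ h
  have rf : bxRt f' ≤ k+1 := by
    refine (bx_rt_le f' cf.1 ((Finset.range (k+2)).erase k) ?_).trans ?_
    · intro x i h
      have h3 := hf1 x trivial
      rw [h] at h3
      simp only [ne_eq, Sum.inr.injEq] at h3
      simp only [Finset.mem_erase, Finset.mem_range]
      refine ⟨h3, ?_⟩
      rcases hsw x with ⟨h1, -⟩ | ⟨h1, -⟩ <;> rw [h1] at h
      · exact hfk _ _ h
      · have := hgk _ _ h; omega
    · rw [Finset.card_erase_of_mem (by simp)]; simp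
  have rg : bxRt g' ≤ k+1 := by
    refine (bx_rt_le g' cg.1 ((Finset.range (k+2)).erase (k+1)) ?_).trans ?_
    · intro x i h
      have h3 := hg1 x trivial
      rw [h] at h3
      simp only [ne_eq, Sum.inr.injEq] at h3
      simp only [Finset.mem_erase, Finset.mem_range]
      refine ⟨h3, ?_⟩
      rcases hsw x with ⟨-, h1⟩ | ⟨-, h1⟩ <;> rw [h1] at h
      · have := hgk _ _ h; omega
      · exact hfk _ _ h
    · rw [Finset.card_erase_of_mem (by simp)]; simp
  have e1 := (bx_fact1 e f' cf).trans (bx_cMax_mono' β rf)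
  have e2 := (bx_fact1 e g' cg).trans (bx_cMax_mono' β rg)
  have : bxNl f' + bxNl g' = bxNl f + bxNl g := by
    simp only [bx_nl_sum, ← Finset.sum_add_distrib]
    refine Finset.sum_congr rfl fun x _ => ?_
    rcases hsw x with ⟨h1, h2⟩ | ⟨h1, h2⟩ <;> rw [h1, h2]
    rw [add_comm]
  omega

/-- base weight -/
def bxW0 (t : ℤ) (x : α) (r : α ⊕ ℕ) : ℤ :=
  if r.isRight then 1 - t else if r = Sum.inl x then 0 else 1

/-- weight -/
def bxW (t : ℤ) (p₁ p₂ : α) (x : α) (r : α ⊕ ℕ) : ℤ :=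
  bxW0 t x r + (if r = Sum.inl p₁ then 1 - t else 0) + (if r = Sum.inl p₂ then 1 - t else 0)

lemma bx_w0_sum (t : ℤ) (f : α → α ⊕ ℕ) : ∑ x, bxW0 t x (f x) = bxNl f - t * bxRt f := by
  have h1 : (bxNl f : ℤ) = ∑ x, if f x ≠ Sum.inl x then 1 else 0 := by
    rw [bxNl, Finset.card_filter]; push_cast; rfl
  have h2 : (bxRt f : ℤ) = ∑ x, if (f x).isRight = true then 1 else 0 := by
    rw [bxRt, Finset.card_filter]; push_cast; rfl
  rw [h1, h2, Finset.mul_sum, ← Finset.sum_sub_distrib]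
  refine Finset.sum_congr rfl fun x _ => ?_
  unfold bxW0
  cases f x with
  | inl y => by_cases h : y = x <;> simp [h]
  | inr i => simp

lemma bx_split (p₁ p₂ : α) (hne : p₁ ≠ p₂) (F : α → ℤ) :
    ∑ x, F x = ∑ x ∈ Finset.univ.filter (fun x => x ≠ p₁ ∧ x ≠ p₂), F x + F p₁ + F p₂ := by
  rw [← Finset.sum_filter_add_sum_filter_not Finset.univ (fun x => x ≠ p₁ ∧ x ≠ p₂), add_assoc]
  congr 1
  have : Finset.univ.filter (fun x => ¬ (x ≠ p₁ ∧ x ≠ p₂)) = {p₁, p₂} := by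
    ext x; simp; tauto
  rw [this, Finset.sum_pair hne]

lemma bx_hit (s : Finset α) (f : α → α ⊕ ℕ) (hf : Set.InjOn f s) (p : α) (c : ℤ) :
    ∑ x ∈ s, (if f x = Sum.inl p then c else 0) = if ∃ x ∈ s, f x = Sum.inl p then c else 0 := by
  by_cases h : ∃ x ∈ s, f x = Sum.inl p
  · rw [if_pos h]
    obtain ⟨x, hx, hfx⟩ := h
    rw [Finset.sum_eq_single x]
    · simp [hfx]
    · intro y hy hyx
      rw [if_neg]
      intro h'
      exact hyx (hf hy hx (h'.trans hfx.symm))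
    · exact fun h => absurd hx h
  · rw [if_neg h]
    push Not at h
    exact Finset.sum_eq_zero fun x hx => if_neg (h x hx)

lemma bx_w_sum (t : ℤ) (p₁ p₂ : α) (s : Finset α) (f : α → α ⊕ ℕ) (hf : Set.InjOn f s) :
    ∑ x ∈ s, bxW t p₁ p₂ x (f x) = ∑ x ∈ s, bxW0 t x (f x) +
      (if ∃ x ∈ s, f x = Sum.inl p₁ then 1 - t else 0) +
      (if ∃ x ∈ s, f x = Sum.inl p₂ then 1 - t else 0) := by
  unfold bxW
  rw [Finset.sum_add_distrib, Finset.sum_add_distrib, bx_hit s f hf, bx_hit s f hf]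

lemma bx_lemA (t : ℤ) (ht : 1 ≤ t) (p₁ p₂ : α) (hne : p₁ ≠ p₂)
    (h₁ : ∀ x : α, p₁ ≤ x → x = p₁) (h₂ : ∀ x : α, p₂ ≤ x → x = p₂)
    (f : α → α ⊕ ℕ) (hf : Function.Injective f) (hle : ∀ x y, f x = Sum.inl y → x ≤ y) :
    (bxNl f : ℤ) - t * bxRt f ≤
      ∑ x ∈ Finset.univ.filter (fun x => x ≠ p₁ ∧ x ≠ p₂), bxW t p₁ p₂ x (f x) := by
  rw [← bx_w0_sum, bx_split p₁ p₂ hne, bx_w_sum _ _ _ _ _ hf.injOn]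
  have key : ∀ p : α, (∀ x, p ≤ x → x = p) →
      ∀ s : Finset α, p ∉ s → bxW0 t p (f p) ≤ if ∃ x ∈ s, f x = Sum.inl p then 1 - t else 0 := by
    intro p hp s hps
    unfold bxW0
    cases hfp : f p with
    | inl y =>
      have : y = p := hp y (hle _ _ hfp)
      subst this
      have hn : ¬ ∃ x ∈ s, f x = Sum.inl y := by
        rintro ⟨x, hx, hfx⟩
        exact hps (hf (hfx.trans hfp.symm) ▸ hx)
      rw [if_neg hn]
      simp
    | inr i =>
      simp only [Sum.isRight_inr, if_true]
      split_ifs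
      · exact le_rfl
      · linarith
  have a := key p₁ h₁ (Finset.univ.filter (fun x => x ≠ p₁ ∧ x ≠ p₂)) (by simp)
  have b := key p₂ h₂ (Finset.univ.filter (fun x => x ≠ p₁ ∧ x ≠ p₂)) (by simp)
  linarith

lemma bx_lemB (e : β ↪o α) (t : ℤ) (p₁ p₂ : α) (hne : p₁ ≠ p₂)
    (he : ∀ x, x ≠ p₁ → x ∈ Set.range e)
    (h : α → α ⊕ ℕ) (hh : Set.InjOn h (Finset.univ.filter (fun x => x ≠ p₁ ∧ x ≠ p₂) : Finset α))
    (hle : ∀ x y, x ≠ p₁ ∧ x ≠ p₂ → h x = Sum.inl y → x ≤ y)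
    (hav : ∀ x, x ≠ p₁ ∧ x ≠ p₂ → h x ≠ Sum.inl p₁) :
    ∃ k : ℕ, ∑ x ∈ Finset.univ.filter (fun x => x ≠ p₁ ∧ x ≠ p₂), bxW t p₁ p₂ x (h x) ≤
      (cMax β k : ℤ) - t * k := by
  classical
  set s := Finset.univ.filter (fun x : α => x ≠ p₁ ∧ x ≠ p₂) with hs
  have hms : ∀ x, x ∈ s ↔ x ≠ p₁ ∧ x ≠ p₂ := by simp [hs]
  obtain ⟨N, hN⟩ : ∃ N : ℕ, ∀ x, h x ≠ Sum.inr N := by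
    obtain ⟨r, hr⟩ := Infinite.exists_notMem_finset
      ((Finset.univ.image h).preimage Sum.inr Sum.inr_injective.injOn)
    exact ⟨r, fun x hx => hr (by simp [← hx])⟩
  let c : α ⊕ ℕ := if ∃ x ∈ s, h x = Sum.inl p₂ then Sum.inr N else Sum.inl p₂
  let f : α → α ⊕ ℕ := fun x => if x = p₁ then Sum.inl p₁ else if x = p₂ then c else h x
  have f1 : f p₁ = Sum.inl p₁ := by simp [f]
  have f2 : f p₂ = c := by simp [f, hne.symm]
  have f3 : ∀ x, x ≠ p₁ ∧ x ≠ p₂ → f x = h x := by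
    intro x hx; simp [f, hx.1, hx.2]
  have hc1 : c ≠ Sum.inl p₁ := by
    simp only [c]; split_ifs <;> simp [hne.symm]
  have hc2 : ∀ x, x ≠ p₁ ∧ x ≠ p₂ → h x ≠ c := by
    intro x hx
    simp only [c]; split_ifs with h0
    · exact hN x
    · push Not at h0; exact h0 x ((hms x).2 hx)
  have hcfg : BxCfg (fun x => x ∈ Set.range e) f := by
    refine ⟨?_, ?_, ?_⟩
    · have cases3 : ∀ x, x = p₁ ∨ x = p₂ ∨ (x ≠ p₁ ∧ x ≠ p₂) := fun x => by tauto
      intro x y hxy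
      rcases cases3 x with rfl | rfl | hx <;> rcases cases3 y with rfl | rfl | hy
      · rfl
      · rw [f1, f2] at hxy; exact absurd hxy.symm hc1
      · rw [f1, f3 y hy] at hxy; exact absurd hxy.symm (hav y hy)
      · rw [f1, f2] at hxy; exact absurd hxy hc1
      · rfl
      · rw [f2, f3 y hy] at hxy; exact absurd hxy.symm (hc2 y hy)
      · rw [f1, f3 x hx] at hxy; exact absurd hxy (hav x hx)
      · rw [f2, f3 x hx] at hxy; exact absurd hxy (hc2 x hx)
      · rw [f3 x hx, f3 y hy] at hxy
        exact hh (by simpa [hms] using hx) (by simpa [hms] using hy) hxy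
    · intro x y hxy
      by_cases hx1 : x = p₁
      · subst hx1; rw [f1] at hxy; exact (Sum.inl_injective hxy).le
      by_cases hx2 : x = p₂
      · subst hx2; rw [f2] at hxy
        simp only [c] at hxy
        split_ifs at hxy
        exact (Sum.inl_injective hxy).le
      · rw [f3 x ⟨hx1, hx2⟩] at hxy; exact hle x y ⟨hx1, hx2⟩ hxy
    · intro x hx
      have : x = p₁ := by by_contra h'; exact hx (he x h')
      rw [this, f1]
  refine ⟨bxRt f, ?_⟩
  have hb := bx_fact1 e f hcfg
  have hsum := bx_w0_sum t f
  rw [bx_split p₁ p₂ hne, ← hs] at hsum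
  rw [bx_w_sum _ _ _ _ _ hh, if_neg (by rintro ⟨x, hx, hx'⟩; exact hav x ((hms x).1 hx) hx')]
  have e1 : ∑ x ∈ s, bxW0 t x (f x) = ∑ x ∈ s, bxW0 t x (h x) :=
    Finset.sum_congr rfl fun x hx => by rw [f3 x ((hms x).1 hx)]
  have e2 : bxW0 t p₁ (f p₁) = 0 := by rw [f1]; simp [bxW0]
  have e3 : bxW0 t p₂ (f p₂) = if ∃ x ∈ s, h x = Sum.inl p₂ then 1 - t else 0 := by
    rw [f2]; simp only [c]; split_ifs <;> simp [bxW0]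
  rw [e1, e2, e3] at hsum
  have : (bxNl f : ℤ) ≤ cMax β (bxRt f) := by exact_mod_cast hb
  linarith

end bx

lemma bx_submod (α : Type*) [PartialOrder α] [Fintype α] [DecidableEq α]
    (p₁ p₂ : α) (hne : p₁ ≠ p₂)
    (h₁ : ∀ x : α, p₁ ≤ x → x = p₁) (h₂ : ∀ x : α, p₂ ≤ x → x = p₂) (t : ℤ) (ht : 1 ≤ t)
    (k k' : ℕ) : ∃ m m' : ℕ,
    ((cMax α k : ℤ) - t * k) + ((cMax {x : α // x ≠ p₁ ∧ x ≠ p₂} k' : ℤ) - t * k') ≤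
    ((cMax {x : α // x ≠ p₁} m : ℤ) - t * m) + ((cMax {x : α // x ≠ p₂} m' : ℤ) - t * m') := by
  classical
  obtain ⟨f, hf, hfn, hfk⟩ := bx_fact2 (OrderIso.refl α).toOrderEmbedding k
  obtain ⟨g, hg, hgn, hgk⟩ := bx_fact2 (OrderEmbedding.subtype (fun x : α => x ≠ p₁ ∧ x ≠ p₂)) k'
  have rf := bx_rt_le f hf.1 (Finset.range k) (fun x i h => by simpa using hfk x i h)
  have rg := bx_rt_le g hg.1 (Finset.range k') (fun x i h => by simpa using hgk x i h)
  rw [Finset.card_range] at rf rg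
  have gp : ∀ p, ¬ (p ≠ p₁ ∧ p ≠ p₂) → g p = Sum.inl p := by
    intro p hp
    apply hg.2.2
    rintro ⟨b, hb⟩
    exact hp (hb ▸ b.2)
  set s := Finset.univ.filter (fun x : α => x ≠ p₁ ∧ x ≠ p₂) with hs
  have hms : ∀ x, x ∈ (s : Set α) ↔ x ≠ p₁ ∧ x ≠ p₂ := by simp [hs]
  obtain ⟨f', g', hf', hg', hsw, hf1, hg1⟩ := bx_exchange (s : Set α) f g hf.1.injOn hg.1.injOn
    (Sum.inl p₁) (Sum.inl p₂) (by simpa using hne)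
    (fun x hx h => ((hms x).1 hx).1 (hg.1 (h.trans (gp p₁ (by simp)).symm)))
    (fun x hx h => ((hms x).1 hx).2 (hg.1 (h.trans (gp p₂ (by simp)).symm)))
  have A1 := bx_lemA t ht p₁ p₂ hne h₁ h₂ f hf.1 hf.2.1
  have A2 := bx_lemA t ht p₁ p₂ hne h₁ h₂ g hg.1 hg.2.1
  obtain ⟨m, B1⟩ := bx_lemB (OrderEmbedding.subtype (fun x : α => x ≠ p₁)) t p₁ p₂ hne
    (fun x hx => ⟨⟨x, hx⟩, rfl⟩) f' hf'
    (fun x y _ h => by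
      rcases hsw x with ⟨h1, -⟩ | ⟨h1, -⟩ <;> rw [h1] at h
      · exact hf.2.1 _ _ h
      · exact hg.2.1 _ _ h)
    (fun x hx => hf1 x ((hms x).2 hx))
  have hs' : Finset.univ.filter (fun x : α => x ≠ p₂ ∧ x ≠ p₁) = s := by
    ext x; simp [hs, and_comm]
  obtain ⟨m', B2⟩ := bx_lemB (OrderEmbedding.subtype (fun x : α => x ≠ p₂)) t p₂ p₁ hne.symm
    (fun x hx => ⟨⟨x, hx⟩, rfl⟩) g' (by rw [hs']; exact hg')
    (fun x y _ h => by
      rcases hsw x with ⟨-, h1⟩ | ⟨-, h1⟩ <;> rw [h1] at h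
      · exact hg.2.1 _ _ h
      · exact hf.2.1 _ _ h)
    (fun x hx => hg1 x ((hms x).2 hx.symm))
  rw [hs'] at B2
  rw [← hs] at A1 A2 B1
  have hW : ∑ x ∈ s, bxW t p₂ p₁ x (g' x) = ∑ x ∈ s, bxW t p₁ p₂ x (g' x) :=
    Finset.sum_congr rfl fun x _ => by unfold bxW; ring
  have htot : ∑ x ∈ s, bxW t p₁ p₂ x (f' x) + ∑ x ∈ s, bxW t p₁ p₂ x (g' x) =
      ∑ x ∈ s, bxW t p₁ p₂ x (f x) + ∑ x ∈ s, bxW t p₁ p₂ x (g x) := by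
    rw [← Finset.sum_add_distrib, ← Finset.sum_add_distrib]
    refine Finset.sum_congr rfl fun x _ => ?_
    rcases hsw x with ⟨h1, h2⟩ | ⟨h1, h2⟩ <;> rw [h1, h2]
    rw [add_comm]
  refine ⟨m, m', ?_⟩
  rw [← hfn, ← hgn]
  have r1 : t * (bxRt f : ℤ) ≤ t * k := by gcongr
  have r2 : t * (bxRt g : ℤ) ≤ t * k' := by gcongr
  linarith

lemma bx_lam_succ (β : Type*) [PartialOrder β] [Fintype β] [DecidableEq β] (k : ℕ) :
    cMax β (k+1) = cMax β k + lam β (k+1) := by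
  have := bx_cMax_mono β k
  simp only [lam, Nat.add_sub_cancel]
  omega

lemma bx_lam_anti (β : Type*) [PartialOrder β] [Fintype β] [DecidableEq β] {i j : ℕ} (hij : i ≤ j) :
    lam β (j+1) ≤ lam β (i+1) := by
  have : Antitone (fun i => lam β (i+1)) := antitone_nat_of_succ_le fun n => by
    have h1 := bx_lam_succ β n
    have h2 := bx_lam_succ β (n+1)
    have h3 := bx_concave β n
    simp only [show n + 2 = n + 1 + 1 from rfl] at h3
    omega
  exact this hij

lemma bx_tele (β γ : Type*) [PartialOrder β] [Fintype β] [DecidableEq β]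
    [PartialOrder γ] [Fintype γ] [DecidableEq γ] (y : ℕ) (hy : 1 ≤ y) (hpos : 1 ≤ lam β y)
    (h : ∀ i, lam γ i = lam β i - (if i = y then 1 else 0)) (k : ℕ) :
    cMax γ k + (if y ≤ k then 1 else 0) = cMax β k := by
  induction k with
  | zero => rw [bx_cMax_zero, bx_cMax_zero, if_neg (by omega)]
  | succ k ih =>
    rw [bx_lam_succ, bx_lam_succ, h]
    by_cases hk : k + 1 = y
    · rw [if_neg (by omega)] at ih
      subst hk
      simp only [if_true, le_refl]
      omega
    · rw [if_neg hk]
      by_cases h2 : y ≤ k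
      · rw [if_pos h2] at ih; rw [if_pos (by omega)]; omega
      · rw [if_neg h2] at ih; rw [if_neg (by omega)]; omega

lemma bx_up (β : Type*) [PartialOrder β] [Fintype β] [DecidableEq β] (t : ℤ) (a : ℕ)
    (h : (lam β (a+1) : ℤ) ≤ t) (d : ℕ) : (cMax β (a + d) : ℤ) - t * (a + d : ℕ) ≤ cMax β a - t * a := by
  induction d with
  | zero => simp
  | succ d ih =>
    have h1 := bx_lam_succ β (a+d)
    have h2 := bx_lam_anti β (Nat.le_add_right a d)
    rw [← add_assoc, h1]
    push_cast at ih ⊢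
    have : (lam β (a+d+1) : ℤ) ≤ lam β (a+1) := by exact_mod_cast h2
    linarith

lemma bx_down (β : Type*) [PartialOrder β] [Fintype β] [DecidableEq β] (t : ℤ) (a d : ℕ)
    (h : ∀ j, j < a + d → t ≤ (lam β (j+1) : ℤ)) :
    (cMax β a : ℤ) - t * a ≤ cMax β (a+d) - t * (a + d : ℕ) := by
  induction d with
  | zero => simp
  | succ d ih =>
    have h1 := bx_lam_succ β (a+d)
    have ih := ih (fun j hj => h j (by omega))
    have h2 := h (a+d) (by omega)
    rw [← add_assoc, h1]
    push_cast at ih ⊢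
    linarith

theorem two_maximal_elements_box_rule
    (α : Type*) [PartialOrder α] [Fintype α] [DecidableEq α]
    (p₁ p₂ : α) (hne : p₁ ≠ p₂)
    (h₁ : ∀ x : α, p₁ ≤ x → x = p₁) (h₂ : ∀ x : α, p₂ ≤ x → x = p₂)
    (yB yA : ℕ) (hyB : 1 ≤ yB) (hyA : 1 ≤ yA)
    (hBpos : 1 ≤ lam α yB) (hApos : 1 ≤ lam {x : α // x ≠ p₁} yA)
    (hB1 : ∀ i : ℕ, lam {x : α // x ≠ p₁} i = lam α i - (if i = yB then 1 else 0))
    (hB2 : ∀ i : ℕ, lam {x : α // x ≠ p₂} i = lam α i - (if i = yB then 1 else 0))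
    (hA : ∀ i : ℕ, lam {x : α // x ≠ p₁ ∧ x ≠ p₂} i
        = lam {x : α // x ≠ p₁} i - (if i = yA then 1 else 0)) :
    lam α yB ≤ lam {x : α // x ≠ p₁} yA := by
  by_contra hlt
  push Not at hlt
  have c1 := bx_tele α {x : α // x ≠ p₁} yB hyB hBpos hB1
  have c2 := bx_tele α {x : α // x ≠ p₂} yB hyB hBpos hB2
  have c12 := bx_tele {x : α // x ≠ p₁} {x : α // x ≠ p₁ ∧ x ≠ p₂} yA hyA hApos hA
  obtain ⟨a, rfl⟩ : ∃ a, yA = a + 1 := ⟨yA - 1, by omega⟩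
  obtain ⟨b, rfl⟩ : ∃ b, yB = b + 1 := ⟨yB - 1, by omega⟩
  set t : ℤ := (lam {x : α // x ≠ p₁} (a+1) : ℤ) with htdef
  have ht : 1 ≤ t := by rw [htdef]; exact_mod_cast hApos
  have hc12 : cMax {x : α // x ≠ p₁ ∧ x ≠ p₂} a = cMax {x : α // x ≠ p₁} a := by
    have := c12 a
    rw [if_neg (by omega)] at this
    exact this
  have hmax : ∀ m : ℕ, (cMax {x : α // x ≠ p₁} m : ℤ) - t * m ≤ cMax {x : α // x ≠ p₁} a - t * a := by
    intro m
    rcases le_total a m with h | h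
    · obtain ⟨d, rfl⟩ := Nat.exists_eq_add_of_le h
      exact bx_up _ t a le_rfl d
    · obtain ⟨d, rfl⟩ := Nat.exists_eq_add_of_le h
      refine bx_down _ t m d ?_
      intro j hj
      rw [htdef]
      exact_mod_cast bx_lam_anti _ (by omega : j ≤ m + d)
  have h21 : ∀ m, cMax {x : α // x ≠ p₂} m = cMax {x : α // x ≠ p₁} m := by
    intro m; have := c1 m; have := c2 m; omega
  have hall : ∀ k : ℕ, (cMax α k : ℤ) - t * k ≤ cMax {x : α // x ≠ p₁} a - t * a := by
    intro k
    obtain ⟨m, m', h⟩ := bx_submod α p₁ p₂ hne h₁ h₂ t ht k a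
    rw [hc12, h21] at h
    have := hmax m
    have := hmax m'
    linarith
  have hca := c1 a
  by_cases hab : b + 1 ≤ a
  · rw [if_pos hab] at hca
    have := hall a
    rw [← hca] at this
    push_cast at this
    linarith
  · rw [if_neg hab] at hca
    have hx := hall (b+1)
    rw [add_zero] at hca
    rw [hca] at hx
    obtain ⟨d, hd⟩ : ∃ d, b + 1 = a + (d + 1) := ⟨b - a, by omega⟩
    have hlt' : t + 1 ≤ (lam α (b+1) : ℤ) := by rw [htdef]; exact_mod_cast hlt
    have hy := bx_down α (t+1) a (d+1) (fun j hj => hlt'.trans (by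
      exact_mod_cast bx_lam_anti α (by omega : j ≤ b)))
    rw [hd] at hx
    push_cast at hx hy
    linarith
end
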